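/- arXiv:1209.5840 — 2 statements merged into one kernel-verified Lean document; each statement's English description precedes it below -/
import Mathlib

section
/- Let S ⊆ ℝⁿ (n ≥ 2) be a d-set with n−1 < d < n, let 1 < p < ∞ and s > (n−d)/p, and set k = [s]+1. Then there is a constant c > 0 (depending on n, d, p, s and S) such that for every f ∈ L^p(ℝⁿ) whose trace satisfies Tr_S f = 0 ℋᵈ-almost everywhere on S, one has (∫_{ℝⁿ} |f(x)|^p / dist(x,S)^{sp} dx)^{1/p} ≤ c (‖f‖_{L^p(ℝⁿ)} + ‖f♯_{s,p}‖_{L^p(ℝⁿ)}), where f♯_{s,p}(x) := sup_{0<r≤1} r^{−s} ℰ_k(f, Q(x,r))_{L^p}. -/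
open MeasureTheory Metric Set Filter
open scoped ENNReal NNReal Topology

noncomputable section

/-- ℝⁿ, with the sup-norm (given by the product metric on `Fin n → ℝ`). -/
abbrev Rn (n : ℕ) := Fin n → ℝ

/-- `S` is an (Ahlfors) `d`-set with regularity constant `C`. -/
def IsDSet {n : ℕ} (S : Set (Rn n)) (d C : ℝ) : Prop :=
  IsClosed S ∧ 1 < C ∧ ∀ w ∈ S, ∀ r : ℝ, 0 < r → r ≤ 1 →
    ENNReal.ofReal (C⁻¹ * r ^ d) ≤ μH[d] (closedBall w r ∩ S) ∧
      μH[d] (closedBall w r ∩ S) ≤ ENNReal.ofReal (C * r ^ d)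

/-- `Tr_S f = 0` pointwise ℋᵈ-almost everywhere on `S`. -/
def TraceZero {n : ℕ} (S : Set (Rn n)) (d : ℝ) (f : Rn n → ℝ) : Prop :=
  ∀ᵐ x ∂(μH[d]).restrict S,
    Tendsto (fun r : ℝ => ⨍ y in closedBall x r, f y) (𝓝[>] 0) (𝓝 0)

/-- The normalized local best approximation `ℰ_k(f, Q(x,r))_{L^u}`. -/
def localApprox {n : ℕ} (k : ℕ) (u : ℝ) (f : Rn n → ℝ) (x : Rn n) (r : ℝ) : ℝ≥0∞ :=
  ⨅ (P : MvPolynomial (Fin n) ℝ) (_ : P.totalDegree ≤ k - 1),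
    ((volume (closedBall x r))⁻¹ *
      ∫⁻ y in closedBall x r, ENNReal.ofReal |f y - MvPolynomial.eval y P| ^ u) ^ (1 / u)

/-- The sharp maximal-type function
`f♯_{s,p}(x) = sup_{0<r≤1} r^{−s} ℰ_k(f,Q(x,r))_{L^p}` with `k = [s]+1`. -/
def fSharp {n : ℕ} (s p : ℝ) (f : Rn n → ℝ) (x : Rn n) : ℝ≥0∞ :=
  ⨆ (r : ℝ) (_ : r ∈ Set.Ioc (0:ℝ) 1),
    ENNReal.ofReal (r ^ (-s)) * localApprox (⌊s⌋₊ + 1) p f x r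

/-- The left hand side of the Hardy inequality, with distance in the sup-norm. -/
def hardyLHS {n : ℕ} (S : Set (Rn n)) (s p : ℝ) (f : Rn n → ℝ) : ℝ≥0∞ :=
  (∫⁻ x, ENNReal.ofReal (|f x| ^ p / infDist x S ^ (s * p))) ^ (1 / p)

/-! At a Lebesgue point `x` of `f` at distance about `r` from `S`, compare `f` with a near-best
polynomial `P` on a cube around `x`. Since `d > n - 1`, the zero set of a nonzero polynomial is
`μH[d]`-null, so by compactness `P` satisfies a Remez inequality: `|P x|` is controlled by the mean
of `|P|` over `S` near `x`. There the trace of `f` vanishes, so `|P|` is the error of approximating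
the trace by `P`; that error telescopes over the dyadic scales below `r`, once the plain averages of
`f` are replaced by their Richardson extrapolations, which reproduce polynomials.

This bounds `|f x|` by local approximation errors centred on `S`, where the sharp function need not
be under control. But `d < n` makes `S` porous, so each such error is dominated by the average of
the sharp function over points of the same cube lying in boundedly many dyadic layers around `S`.
Integrating against `μH[d]` instead of the volume costs a factor `r ^ (d - n)`; the smoothness
factor `r ^ (s * p)` beats it because `s * p > n - d`, so the errors sum geometrically. -/

section Polynomials

open MvPolynomial

lemma totalDegree_aeval_le {R σ τ : Type*} [CommSemiring R] {g : σ → MvPolynomial τ R}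
    (hg : ∀ i, (g i).totalDegree ≤ 1) (P : MvPolynomial σ R) :
    (aeval g P).totalDegree ≤ P.totalDegree := by
  rw [aeval_def, eval₂]
  refine (totalDegree_finsetSum _ _).trans (Finset.sup_le fun a ha => ?_)
  calc (algebraMap R (MvPolynomial τ R) (P.coeff a) * a.prod fun i e => g i ^ e).totalDegree
      ≤ (a.prod fun i e => g i ^ e).totalDegree := by
        refine (totalDegree_mul _ _).trans ?_
        rw [algebraMap_eq, totalDegree_C, zero_add]
    _ ≤ a.sum fun _ e => e :=
        (totalDegree_finsetProd _ _).trans <| Finset.sum_le_sum fun i _ =>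
          (totalDegree_pow _ _).trans (mul_le_of_le_one_right' (hg i))
    _ ≤ P.totalDegree := le_totalDegree ha

lemma exists_eval_eq_eval_add_smul {σ : Type*} (P : MvPolynomial σ ℝ) (w : σ → ℝ) (r : ℝ) :
    ∃ Q : MvPolynomial σ ℝ, Q.totalDegree ≤ P.totalDegree ∧
      ∀ z, eval z Q = eval (w + r • z) P := by
  refine ⟨aeval (fun i => C (w i) + C r * X i) P, totalDegree_aeval_le (fun i => ?_) P,
    fun z => ?_⟩
  · refine (totalDegree_add _ _).trans (max_le (by simp) ?_)
    exact (totalDegree_mul _ _).trans (by simp)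
  · have h : (eval z).comp (aeval fun i => C (w i) + C r * X i).toRingHom = eval (w + r • z) :=
      ringHom_ext (by simp) (by simp)
    exact RingHom.congr_fun h P

lemma exists_polynomial_eval_eq_eval_add_smul {σ : Type*} (P : MvPolynomial σ ℝ) (y v : σ → ℝ) :
    ∃ q : Polynomial ℝ, q.natDegree ≤ P.totalDegree ∧
      ∀ t, q.eval t = eval (y + t • v) P := by
  refine ⟨aeval (fun i => Polynomial.C (y i) + Polynomial.X * Polynomial.C (v i)) P,
    (aeval_natDegree_le P le_rfl _ (n := 1) fun i => by compute_degree).trans_eq (mul_one _),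
    fun t => ?_⟩
  have h : (Polynomial.evalRingHom t).comp
      (aeval fun i => Polynomial.C (y i) + Polynomial.X * Polynomial.C (v i)).toRingHom =
        eval (y + t • v) :=
    ringHom_ext (by simp) fun i => by simp [mul_comm t]
  exact RingHom.congr_fun h P

/-- The coefficients of the Richardson extrapolation to `0` of a polynomial of degree at most `m`
from its values at the nodes `1, 1/2, …, (1/2) ^ m`. -/
def richardsonCoeff (m l : ℕ) : ℝ :=
  (Lagrange.basis (Finset.range (m + 1)) (fun i : ℕ => (1 / 2 : ℝ) ^ i) l).eval 0

lemma sum_richardsonCoeff_mul_eval {σ : Type*} {m : ℕ} {P : MvPolynomial σ ℝ}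
    (hP : P.totalDegree ≤ m) (y v : σ → ℝ) :
    ∑ l ∈ Finset.range (m + 1), richardsonCoeff m l * eval (y + (1 / 2 : ℝ) ^ l • v) P =
      eval y P := by
  obtain ⟨q, hq, hqP⟩ := exists_polynomial_eval_eq_eval_add_smul P y v
  have hnodes : InjOn (fun i : ℕ => (1 / 2 : ℝ) ^ i) (Finset.range (m + 1)) :=
    (pow_right_injective₀ (by norm_num) (by norm_num)).injOn
  have hdeg : q.degree < (Finset.range (m + 1)).card := by
    rw [Finset.card_range]
    exact Polynomial.degree_le_natDegree.trans_lt
      (by exact_mod_cast Nat.lt_succ_of_le (hq.trans hP))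
  have h := congrArg (Polynomial.eval 0) (Lagrange.eq_interpolate hnodes hdeg)
  simp only [Lagrange.interpolate_apply, Polynomial.eval_finsetSum, Polynomial.eval_mul,
    Polynomial.eval_C, hqP, zero_smul, add_zero] at h
  rw [h]
  exact Finset.sum_congr rfl fun l _ => mul_comm _ _

lemma totalDegree_pderiv_le {R σ : Type*} [CommSemiring R] (i : σ) (P : MvPolynomial σ R) :
    (pderiv i P).totalDegree ≤ P.totalDegree - 1 := by
  refine Finset.sup_le fun a ha => ?_
  rw [mem_support_iff, coeff_pderiv] at ha
  have h := le_totalDegree (mem_support_iff.2 (left_ne_zero_of_mul ha))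
  rw [Finsupp.sum_add_index' (by simp) (by simp), Finsupp.sum_single_index rfl] at h
  omega

lemma eq_C_of_forall_pderiv_eq_zero {R σ : Type*} [CommSemiring R] [NoZeroDivisors R] [CharZero R]
    {P : MvPolynomial σ R} (hP : ∀ i, pderiv i P = 0) : P = C (P.coeff 0) := by
  classical
  ext a
  rw [coeff_C]
  split_ifs with h
  · rw [h]
  obtain ⟨i, hi⟩ : ∃ i, a i ≠ 0 := by
    simpa [Finsupp.ext_iff, eq_comm] using h
  have h1 := congrArg (coeff (a - Finsupp.single i 1)) (hP i)
  rw [coeff_pderiv, tsub_add_cancel_of_le (by rw [Finsupp.single_le_iff]; omega), coeff_zero] at h1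
  exact (mul_eq_zero.1 h1).resolve_right (Nat.cast_add_one_ne_zero _)

lemma hasStrictFDerivAt_eval {σ : Type*} [Fintype σ] (P : MvPolynomial σ ℝ) (x : σ → ℝ) :
    HasStrictFDerivAt (fun z : σ → ℝ => eval z P)
      (∑ i, eval x (pderiv i P) • (ContinuousLinearMap.proj i : (σ → ℝ) →L[ℝ] ℝ)) x := by
  classical
  induction P using MvPolynomial.induction_on with
  | C a => simpa using hasStrictFDerivAt_const a x
  | add P Q hP hQ => simpa [add_smul, Finset.sum_add_distrib] using! hP.add hQ
  | mul_X P i hP =>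
    have h := hP.mul (hasStrictFDerivAt_apply i x)
    refine (h.congr_fderiv ?_).congr_of_eventuallyEq (.of_forall fun z => by simp)
    ext v
    simp [pderiv_X, Pi.single_apply, Finset.mul_sum, add_mul, Finset.sum_add_distrib, apply_ite,
      mul_assoc, ite_mul]

end Polynomials

section ZeroSets

lemma exists_mem_nhds_dimH_inter_preimage_le {E F : Type*} [NormedAddCommGroup E]
    [NormedSpace ℝ E] [FiniteDimensional ℝ E] [NormedAddCommGroup F] [NormedSpace ℝ F]
    [FiniteDimensional ℝ F] {f : E → F} {f' : E →L[ℝ] F} {x : E}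
    (hf : HasStrictFDerivAt f f' x) (hf' : f'.range = ⊤) :
    ∃ U ∈ 𝓝 x, dimH (f ⁻¹' {f x} ∩ U) ≤ Module.finrank ℝ f'.ker := by
  have : CompleteSpace E := FiniteDimensional.complete ℝ E
  have : CompleteSpace F := FiniteDimensional.complete ℝ F
  let e := hf.implicitToOpenPartialHomeomorph f f' hf'
  obtain ⟨K, V, hV, hlip⟩ := (hf.to_implicitFunction hf').exists_lipschitzOnWith
  have hcoord : Tendsto (fun z => (e z).2) (𝓝 x) (𝓝 0) := by
    have h := (e.continuousAt (hf.mem_implicitToOpenPartialHomeomorph_source hf')).tendsto.snd_nhds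
    rwa [hf.implicitToOpenPartialHomeomorph_self hf'] at h
  refine ⟨{z | hf.implicitFunction f f' hf' (f z) (e z).2 = z ∧ (e z).2 ∈ V},
    (hf.eq_implicitFunction hf').and (hcoord hV), ?_⟩
  calc dimH _ ≤ dimH (hf.implicitFunction f f' hf' (f x) '' V) := by
        refine dimH_mono ?_
        rintro z ⟨hz, hz', hzV⟩
        exact ⟨(e z).2, hzV, by rwa [← show f z = f x from hz]⟩
    _ ≤ dimH V := hlip.dimH_image_le
    _ ≤ dimH (univ : Set f'.ker) := dimH_mono (subset_univ V)
    _ = Module.finrank ℝ f'.ker := Real.dimH_univ_eq_finrank _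

open MvPolynomial

variable {σ : Type*} [Fintype σ]

lemma dimH_zeros_inter_pderiv_ne_zero_le (P : MvPolynomial σ ℝ) (i : σ) :
    dimH {z : σ → ℝ | eval z P = 0 ∧ eval z (pderiv i P) ≠ 0} ≤ (Fintype.card σ - 1 : ℕ) := by
  classical
  by_contra! h
  obtain ⟨x, ⟨hPx, hix⟩, hx⟩ := exists_mem_nhdsWithin_lt_dimH_of_lt_dimH h
  have hP := hasStrictFDerivAt_eval P x
  set f' : (σ → ℝ) →L[ℝ] ℝ := ∑ i, eval x (pderiv i P) • ContinuousLinearMap.proj i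
  have hf' : f'.toLinearMap ≠ 0 := by
    intro h0
    have h := LinearMap.congr_fun h0 (Pi.single i 1)
    exact hix (by simpa [f', Pi.single_apply] using h)
  obtain ⟨U, hU, hdim⟩ := exists_mem_nhds_dimH_inter_preimage_le hP
    (Module.Dual.range_eq_top_of_ne_zero hf')
  refine (hx _ (inter_mem_nhdsWithin _ hU)).not_ge ?_
  have hker : Module.finrank ℝ f'.ker = Fintype.card σ - 1 := by
    have h := Module.Dual.finrank_ker_add_one_of_ne_zero hf'
    rw [Module.finrank_pi] at h
    exact Nat.eq_sub_of_add_eq h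
  rw [← hker]
  exact (dimH_mono (inter_subset_inter_left U fun z hz => hz.1.trans hPx.symm)).trans hdim

lemma dimH_zeros_le {P : MvPolynomial σ ℝ} (hP : P ≠ 0) :
    dimH {z : σ → ℝ | eval z P = 0} ≤ (Fintype.card σ - 1 : ℕ) := by
  induction hm : P.totalDegree using Nat.strong_induction_on generalizing P with
  | _ m ih =>
  by_cases hderiv : ∀ i, pderiv i P = 0
  · have hconst := eq_C_of_forall_pderiv_eq_zero hderiv
    have hc : P.coeff 0 ≠ 0 := fun h => hP (by rw [hconst, h, C_0])
    rw [hconst]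
    simp [hc]
  obtain ⟨i, hi⟩ := not_forall.1 hderiv
  have hdeg : (pderiv i P).totalDegree < m := by
    refine (totalDegree_pderiv_le i P).trans_lt (hm ▸ Nat.sub_lt (Nat.pos_of_ne_zero ?_) one_pos)
    intro h0
    rw [totalDegree_eq_zero_iff_eq_C.1 h0, pderiv_C] at hi
    exact hi rfl
  calc dimH {z : σ → ℝ | eval z P = 0}
      ≤ dimH ({z : σ → ℝ | eval z P = 0 ∧ eval z (pderiv i P) ≠ 0} ∪
          {z : σ → ℝ | eval z (pderiv i P) = 0}) :=
        dimH_mono fun z hz => (em' _).imp_left (And.intro hz)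
    _ ≤ (Fintype.card σ - 1 : ℕ) := by
        rw [dimH_union]
        exact max_le (dimH_zeros_inter_pderiv_ne_zero_le P i) (ih _ hdeg hi rfl)

lemma hausdorffMeasure_zeros_eq_zero [Nonempty σ] {P : MvPolynomial σ ℝ} (hP : P ≠ 0) {d : ℝ}
    (hd : (Fintype.card σ : ℝ) - 1 < d) : μH[d] {z : σ → ℝ | eval z P = 0} = 0 := by
  have hcard : 1 ≤ Fintype.card σ := Fintype.card_pos
  have hpred : ((Fintype.card σ - 1 : ℕ) : ℝ) < d := by rwa [Nat.cast_pred hcard]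
  lift d to ℝ≥0 using (Nat.cast_nonneg _).trans hpred.le
  refine hausdorffMeasure_of_dimH_lt ((dimH_zeros_le hP).trans_lt ?_)
  exact_mod_cast hpred

end ZeroSets

section Frostman

variable {X : Type*} [MetricSpace X] [MeasurableSpace X]

/-- The Frostman growth condition `ν (B(z, ρ)) ≤ C ρ ^ d`, imposed for radii `ρ ≤ 1/2` only, so
that for `d`-sets the balls of `IsDSet` can be recentred on the set at the cost of doubling `ρ`. -/
def IsFrostman (d : ℝ) (C : ℝ≥0) (ν : Measure X) : Prop :=
  ∀ z, ∀ ρ ∈ Ioc (0 : ℝ) (1 / 2), ν (closedBall z ρ) ≤ C * ENNReal.ofReal ρ ^ d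

lemma exists_isOpen_superset_measure_le_ediam_rpow {d : ℝ} (hd : 0 ≤ d) {t : Set X}
    (ht : ediam t ≤ 1 / 4) {δ : ℝ≥0∞} (hδ : δ ≠ 0) :
    ∃ U, t ⊆ U ∧ IsOpen U ∧ ∀ (C : ℝ≥0) (ν : Measure X), IsFrostman d C ν →
      ν U ≤ C * ((⨆ _ : t.Nonempty, ediam t ^ d) + δ) := by
  rcases t.eq_empty_or_nonempty with rfl | ⟨z, hz⟩
  · exact ⟨∅, empty_subset _, isOpen_empty, by simp⟩
  have htop : ediam t ≠ ⊤ := ne_top_of_le_ne_top (by finiteness) ht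
  have hlt : (ediam t).toReal < 1 / 2 := by
    have h := ENNReal.toReal_mono (by finiteness) ht
    norm_num at h ⊢
    linarith
  have hcont : Tendsto (fun ρ : ℝ => ENNReal.ofReal ρ ^ d) (𝓝[>] (ediam t).toReal)
      (𝓝 (ediam t ^ d)) := by
    have h : Continuous fun ρ : ℝ => ENNReal.ofReal ρ ^ d :=
      ENNReal.continuous_rpow_const.comp ENNReal.continuous_ofReal
    have h' := (h.tendsto (ediam t).toReal).mono_left
      (nhdsWithin_le_nhds (s := Ioi (ediam t).toReal))
    rwa [ENNReal.ofReal_toReal htop] at h'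
  have hltδ : ediam t ^ d < ediam t ^ d + δ := ENNReal.lt_add_right (by finiteness) hδ
  obtain ⟨ρ, hρd, hρ⟩ := ((hcont.eventually_lt_const hltδ).and (Ioo_mem_nhdsGT hlt)).exists
  refine ⟨ball z ρ, fun y hy => ?_, isOpen_ball, fun C ν hν => ?_⟩
  · rw [mem_ball, dist_edist]
    exact (ENNReal.toReal_mono htop (edist_le_ediam_of_mem hy hz)).trans_lt hρ.1
  · rw [iSup_pos ⟨z, hz⟩]
    calc ν (ball z ρ) ≤ ν (closedBall z ρ) := measure_mono ball_subset_closedBall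
      _ ≤ C * ENNReal.ofReal ρ ^ d := hν z ρ ⟨ENNReal.toReal_nonneg.trans_lt hρ.1, hρ.2.le⟩
      _ ≤ C * (ediam t ^ d + δ) := by gcongr

variable [BorelSpace X]

lemma exists_isOpen_superset_frostman_le {d : ℝ} (hd : 0 ≤ d) (C : ℝ≥0) {Z : Set X}
    (hZ : μH[d] Z = 0) {ε : ℝ≥0∞} (hε : ε ≠ 0) :
    ∃ U, Z ⊆ U ∧ IsOpen U ∧ ∀ ν : Measure X, IsFrostman d C ν → ν U ≤ ε := by
  obtain ⟨δ, hδ0, hδ⟩ : ∃ δ : ℝ≥0∞, δ ≠ 0 ∧ C * (δ + δ) ≤ ε := by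
    refine ⟨ε / C / 2, by simp [ENNReal.div_eq_zero_iff, hε], ?_⟩
    rw [ENNReal.add_halves]
    exact ENNReal.mul_div_le
  obtain ⟨t, hZt, ht, hsum⟩ : ∃ t : ℕ → Set X, Z ⊆ ⋃ k, t k ∧ (∀ k, ediam (t k) ≤ 1 / 4) ∧
      ∑' k, (⨆ _ : (t k).Nonempty, ediam (t k) ^ d) < δ := by
    rw [Measure.hausdorffMeasure_apply] at hZ
    simp only [ENNReal.iSup_eq_zero] at hZ
    simpa only [iInf_lt_iff, exists_prop] using (hZ (1 / 4) (by norm_num)).trans_lt hδ0.bot_lt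
  obtain ⟨e, he, hesum⟩ := ENNReal.exists_pos_sum_of_countable hδ0 ℕ
  choose U htU hU hνU using fun k => exists_isOpen_superset_measure_le_ediam_rpow hd (ht k)
    (ENNReal.coe_ne_zero.2 (he k).ne')
  refine ⟨⋃ k, U k, hZt.trans (iUnion_mono htU), isOpen_iUnion hU, fun ν hν => ?_⟩
  calc ν (⋃ k, U k) ≤ ∑' k, ν (U k) := measure_iUnion_le U
    _ ≤ ∑' k, C * ((⨆ _ : (t k).Nonempty, ediam (t k) ^ d) + e k) :=
        ENNReal.tsum_le_tsum fun k => hνU k C ν hν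
    _ = C * (∑' k, (⨆ _ : (t k).Nonempty, ediam (t k) ^ d) + ∑' k, (e k : ℝ≥0∞)) := by
        rw [ENNReal.tsum_mul_left, ENNReal.tsum_add]
    _ ≤ C * (δ + δ) := by gcongr
    _ ≤ ε := hδ

lemma exists_frostman_norm_lt_le {d : ℝ} (hd : 0 ≤ d) (C : ℝ≥0) {K : Set X} (hK : IsCompact K)
    {g : X → ℝ} (hg : Continuous g) (hzero : μH[d] {x | g x = 0} = 0) {ε : ℝ≥0∞} (hε : ε ≠ 0) :
    ∃ τ > 0, ∀ ν : Measure X, IsFrostman d C ν → ν {x ∈ K | ‖g x‖ < τ} ≤ ε := by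
  obtain ⟨U, hzU, hU, hνU⟩ := exists_isOpen_superset_frostman_le hd C hzero hε
  obtain ⟨τ, hτ, hgτ⟩ : ∃ τ > 0, ∀ x ∈ K \ U, τ ≤ ‖g x‖ :=
    (hK.diff hU).exists_forall_le' hg.norm.continuousOn fun x hx =>
      norm_pos_iff.2 fun h0 => hx.2 (hzU h0)
  refine ⟨τ, hτ, fun ν hν => (measure_mono fun x hx => ?_).trans (hνU ν hν)⟩
  by_contra hxU
  exact (hgτ x ⟨hx.1, hxU⟩).not_gt hx.2

end Frostman

section FiniteDimensional

variable {X : Type*} [TopologicalSpace X] [CompactSpace X] [MeasurableSpace X]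

/-- Compactness of the unit sphere makes the thresholds `τ` uniform. -/
lemma exists_forall_measure_norm_lt_le {W : Submodule ℝ C(X, ℝ)} [FiniteDimensional ℝ W]
    {𝓜 : Set (Measure X)} {ε : ℝ≥0∞}
    (h : ∀ g ∈ W, g ≠ 0 → ∃ τ > 0, ∀ ν ∈ 𝓜, ν {x | ‖g x‖ < τ} ≤ ε) :
    ∃ τ > 0, ∀ g ∈ W, ∀ ν ∈ 𝓜, ν {x | ‖g x‖ < τ * ‖g‖} ≤ ε := by
  obtain ⟨τ, hτ, hsphere⟩ : ∃ τ > 0, ∀ g ∈ sphere (0 : W) 1, ∀ ν ∈ 𝓜,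
      ν {x | ‖(g : C(X, ℝ)) x‖ < τ} ≤ ε := by
    refine (isCompact_sphere (0 : W) 1).induction_on (p := fun s => ∃ τ > 0, ∀ g ∈ s, ∀ ν ∈ 𝓜,
      ν {x | ‖(g : C(X, ℝ)) x‖ < τ} ≤ ε) ⟨1, one_pos, by simp⟩ ?_ ?_ ?_
    · rintro s t hst ⟨τ, hτ, ht⟩
      exact ⟨τ, hτ, fun g hg => ht g (hst hg)⟩
    · rintro s t ⟨τ, hτ, hs⟩ ⟨τ', hτ', ht⟩
      refine ⟨min τ τ', lt_min hτ hτ', ?_⟩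
      rintro g (hg | hg) ν hν
      · exact (measure_mono <| ofPred_subset_ofPred.2 fun x hx =>
          hx.trans_le (min_le_left τ τ')).trans (hs g hg ν hν)
      · exact (measure_mono <| ofPred_subset_ofPred.2 fun x hx =>
          hx.trans_le (min_le_right τ τ')).trans (ht g hg ν hν)
    · intro g hg
      obtain ⟨τ, hτ, hgτ⟩ := h g g.2 (by simpa using ne_of_mem_sphere hg one_ne_zero)
      refine ⟨ball g (τ / 2), mem_nhdsWithin_of_mem_nhds (ball_mem_nhds g (half_pos hτ)), τ / 2,
        half_pos hτ, fun g' hg' ν hν => (measure_mono fun x hx => ?_).trans (hgτ ν hν)⟩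
      have hclose : ‖(g : C(X, ℝ)) x - (g' : C(X, ℝ)) x‖ < τ / 2 :=
        ((g - g' : C(X, ℝ)).norm_coe_le_norm x).trans_lt (mem_ball_iff_norm'.1 hg')
      have hx' : ‖(g' : C(X, ℝ)) x‖ < τ / 2 := hx
      have htri := norm_sub_norm_le ((g : C(X, ℝ)) x) ((g' : C(X, ℝ)) x)
      rw [mem_ofPred_eq]
      linarith
  refine ⟨τ, hτ, fun g hg ν hν => ?_⟩
  rcases eq_or_ne g 0 with rfl | hg0
  · simp
  have hnorm : 0 < ‖g‖ := norm_pos_iff.2 hg0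
  have hmem : ‖g‖⁻¹ • (⟨g, hg⟩ : W) ∈ sphere (0 : W) 1 := by
    simp [norm_smul, hnorm.ne']
  refine (measure_mono fun x hx => ?_).trans (hsphere _ hmem ν hν)
  have hx' : ‖g x‖ < τ * ‖g‖ := hx
  simpa [norm_smul, inv_mul_lt_iff₀ hnorm, mul_comm] using hx'

lemma mul_le_lintegral_of_measure_lt_le {α : Type*} [MeasurableSpace α] {ν : Measure α}
    {g : α → ℝ≥0∞} (hg : Measurable g) {c ε : ℝ≥0∞} (hε : ε ≠ ⊤) (hν : ε + ε ≤ ν univ)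
    (hlt : ν {x | g x < c} ≤ ε) : c * ε ≤ ∫⁻ x, g x ∂ν := by
  have hge : ε ≤ ν {x | c ≤ g x} := by
    refine (ENNReal.add_le_add_iff_left hε).1 (hν.trans ?_)
    calc ν univ ≤ ν ({x | g x < c} ∪ {x | c ≤ g x}) :=
          measure_mono fun x _ => lt_or_ge (g x) c
      _ ≤ ε + ν {x | c ≤ g x} := (measure_union_le _ _).trans (by gcongr)
  exact (by gcongr : c * ε ≤ c * ν {x | c ≤ g x}).trans (mul_meas_ge_le_lintegral hg c)

lemma exists_enorm_rpow_le_mul_lintegral [OpensMeasurableSpace X] {W : Submodule ℝ C(X, ℝ)}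
    [FiniteDimensional ℝ W] {𝓜 : Set (Measure X)} {ε : ℝ≥0∞} (hε : ε ≠ 0) (hε' : ε ≠ ⊤)
    (hmass : ∀ ν ∈ 𝓜, ε + ε ≤ ν univ)
    (h : ∀ g ∈ W, g ≠ 0 → ∃ τ > 0, ∀ ν ∈ 𝓜, ν {x | ‖g x‖ < τ} ≤ ε) {p : ℝ} (hp : 0 < p) :
    ∃ K : ℝ≥0∞, K ≠ ⊤ ∧ ∀ g ∈ W, ∀ ν ∈ 𝓜, ∀ z, ‖g z‖ₑ ^ p ≤ K * ∫⁻ x, ‖g x‖ₑ ^ p ∂ν := by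
  obtain ⟨τ, hτ, hW⟩ := exists_forall_measure_norm_lt_le h
  have hτ0 : ENNReal.ofReal τ ^ p * ε ≠ 0 := by
    simp [hε, hτ]
  refine ⟨(ENNReal.ofReal τ ^ p * ε)⁻¹, ENNReal.inv_ne_top.2 hτ0, fun g hg ν hν z => ?_⟩
  have hset : {x | ‖g x‖ₑ ^ p < (ENNReal.ofReal τ * ‖g‖ₑ) ^ p} = {x | ‖g x‖ < τ * ‖g‖} := by
    ext x
    rw [mem_ofPred_eq, mem_ofPred_eq, ENNReal.rpow_lt_rpow_iff hp, ← ofReal_norm, ← ofReal_norm,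
      ← ENNReal.ofReal_mul hτ.le, ENNReal.ofReal_lt_ofReal_iff_of_nonneg (norm_nonneg _)]
  have hmarkov := mul_le_lintegral_of_measure_lt_le (g := fun x => ‖g x‖ₑ ^ p)
    (g.continuous.enorm.measurable.pow_const p) hε' (hmass ν hν) (hset ▸ hW g hg ν hν)
  calc ‖g z‖ₑ ^ p ≤ ‖g‖ₑ ^ p := by
        gcongr
        exact enorm_le_iff_norm_le.2 (g.norm_coe_le_norm z)
    _ = (ENNReal.ofReal τ ^ p * ε)⁻¹ * ((ENNReal.ofReal τ * ‖g‖ₑ) ^ p * ε) := by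
        rw [ENNReal.mul_rpow_of_nonneg _ _ hp.le, mul_right_comm, ← mul_assoc,
          ENNReal.inv_mul_cancel hτ0 (by finiteness), one_mul]
    _ ≤ (ENNReal.ofReal τ ^ p * ε)⁻¹ * ∫⁻ x, ‖g x‖ₑ ^ p ∂ν := by gcongr

end FiniteDimensional

section Remez

open MvPolynomial

variable {σ : Type*}

/-- The space of polynomials of total degree at most `m`, as continuous functions on `K`. -/
def boundedDegreeFunctions (K : Set (σ → ℝ)) (m : ℕ) : Submodule ℝ C(K, ℝ) :=
  (restrictTotalDegree σ ℝ m).map (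
    { toFun P := ⟨fun x => eval (x : σ → ℝ) P, (continuous_eval P).comp continuous_subtype_val⟩
      map_add' P Q := by ext; simp
      map_smul' c P := by ext; simp } : MvPolynomial σ ℝ →ₗ[ℝ] C(K, ℝ))

lemma mem_boundedDegreeFunctions {K : Set (σ → ℝ)} {m : ℕ} {g : C(K, ℝ)} :
    g ∈ boundedDegreeFunctions K m ↔
      ∃ P : MvPolynomial σ ℝ, P.totalDegree ≤ m ∧ ∀ x, g x = eval (x : σ → ℝ) P := by
  simp only [boundedDegreeFunctions, Submodule.mem_map, mem_restrictTotalDegree]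
  refine exists_congr fun P => and_congr_right fun _ => ⟨?_, fun h => ?_⟩
  · rintro rfl x
    rfl
  · ext x
    exact (h x).symm

instance [Finite σ] (K : Set (σ → ℝ)) (m : ℕ) :
    FiniteDimensional ℝ (boundedDegreeFunctions K m) := by
  unfold boundedDegreeFunctions
  infer_instance

variable [Fintype σ] [Nonempty σ] {d : ℝ} (hd : (Fintype.card σ : ℝ) - 1 < d)
include hd

lemma exists_frostman_norm_eval_lt_le (C : ℝ≥0) {P : MvPolynomial σ ℝ} (hP : P ≠ 0)
    {K : Set (σ → ℝ)} (hK : IsCompact K) {ε : ℝ≥0∞} (hε : ε ≠ 0) :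
    ∃ τ > 0, ∀ ν : Measure (σ → ℝ), IsFrostman d C ν → ν {x ∈ K | ‖eval x P‖ < τ} ≤ ε := by
  have hcard : (1 : ℝ) ≤ Fintype.card σ := by exact_mod_cast Fintype.card_pos
  exact exists_frostman_norm_lt_le (by linarith) C hK (continuous_eval P)
    (hausdorffMeasure_zeros_eq_zero hP hd) hε

lemma exists_enorm_eval_rpow_le_mul_setLIntegral_unitBall (C : ℝ≥0) {ε : ℝ≥0∞} (hε : ε ≠ 0)
    (hε' : ε ≠ ⊤) (m : ℕ) {p : ℝ} (hp : 0 < p) :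
    ∃ K : ℝ≥0∞, K ≠ ⊤ ∧ ∀ ν : Measure (σ → ℝ), IsFrostman d C ν → ε + ε ≤ ν (closedBall 0 1) →
      ∀ P : MvPolynomial σ ℝ, P.totalDegree ≤ m → ∀ z ∈ closedBall (0 : σ → ℝ) 1,
        ‖eval z P‖ₑ ^ p ≤ K * ∫⁻ y in closedBall 0 1, ‖eval y P‖ₑ ^ p ∂ν := by
  set B := closedBall (0 : σ → ℝ) 1
  have hB : MeasurableSet B := measurableSet_closedBall
  have : CompactSpace B := isCompact_iff_compactSpace.1 (isCompact_closedBall 0 1)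
  set 𝓜 : Set (Measure B) :=
    {ν' | ∃ ν, IsFrostman d C ν ∧ ε + ε ≤ ν B ∧ ν' = ν.comap ((↑) : B → σ → ℝ)}
  have hmass : ∀ ν' ∈ 𝓜, ε + ε ≤ ν' univ := by
    rintro _ ⟨ν, -, hνB, rfl⟩
    simpa [comap_subtype_coe_apply hB] using hνB
  have hlt : ∀ g ∈ boundedDegreeFunctions B m, g ≠ 0 →
      ∃ τ > 0, ∀ ν' ∈ 𝓜, ν' {x | ‖g x‖ < τ} ≤ ε := by
    intro g hg hg0
    obtain ⟨P, -, hgP⟩ := mem_boundedDegreeFunctions.1 hg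
    have hP : P ≠ 0 := by
      rintro rfl
      exact hg0 (by ext x; simp [hgP])
    obtain ⟨τ, hτ, hPτ⟩ :=
      exists_frostman_norm_eval_lt_le hd C hP (isCompact_closedBall (0 : σ → ℝ) 1) hε
    refine ⟨τ, hτ, ?_⟩
    rintro _ ⟨ν, hν, -, rfl⟩
    rw [comap_subtype_coe_apply hB]
    refine (measure_mono ?_).trans (hPτ ν hν)
    rintro _ ⟨x, hx, rfl⟩
    exact ⟨x.2, hgP x ▸ hx⟩
  obtain ⟨K, hK, h⟩ := exists_enorm_rpow_le_mul_lintegral hε hε' hmass hlt hp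
  refine ⟨K, hK, fun ν hν hνB P hP z hz => ?_⟩
  let g : C(B, ℝ) := ⟨fun x => eval (x : σ → ℝ) P, (continuous_eval P).comp continuous_subtype_val⟩
  have hg := h g (mem_boundedDegreeFunctions.2 ⟨P, hP, fun _ => rfl⟩) _ ⟨ν, hν, hνB, rfl⟩ ⟨z, hz⟩
  exact hg.trans_eq (congrArg (K * ·)
    (lintegral_subtype_comap hB fun y : σ → ℝ => ‖eval y P‖ₑ ^ p))

end Remez

section AhlforsRegular

open MvPolynomial

/-- `μ` is a `d`-regular measure carried by `S`, at scales at most `1/2`, with constants `a` and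
`C`. The upper bound is required at all centres, not only at those in `S`. -/
structure IsAhlforsRegular {X : Type*} [MetricSpace X] [MeasurableSpace X] (S : Set X) (d : ℝ)
    (a C : ℝ≥0) (μ : Measure X) : Prop where
  pos : 0 < a
  isFrostman : IsFrostman d C μ
  le_measure_closedBall : ∀ w ∈ S, ∀ ρ ∈ Ioc (0 : ℝ) (1 / 2),
    a * ENNReal.ofReal ρ ^ d ≤ μ (closedBall w ρ)
  ae_mem : ∀ᵐ x ∂μ, x ∈ S

lemma IsFrostman.sFinite {X : Type*} [MetricSpace X] [SecondCountableTopology X]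
    [MeasurableSpace X] {d : ℝ} (hd : 0 ≤ d) {C : ℝ≥0} {μ : Measure X} (hμ : IsFrostman d C μ) :
    SFinite μ := by
  have : IsLocallyFiniteMeasure μ := ⟨fun x => ⟨closedBall x (1 / 2),
    closedBall_mem_nhds x (by norm_num), (hμ x (1 / 2) (by norm_num)).trans_lt <|
      ENNReal.mul_lt_top ENNReal.coe_lt_top <|
        ENNReal.rpow_lt_top_of_nonneg hd ENNReal.ofReal_ne_top⟩⟩
  infer_instance

lemma IsDSet.exists_isAhlforsRegular {n : ℕ} {S : Set (Rn n)} {d C₀ : ℝ}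
    (hS : IsDSet S d C₀) : ∃ a C : ℝ≥0, IsAhlforsRegular S d a C (μH[d].restrict S) := by
  obtain ⟨hclosed, hC₀, hreg⟩ := hS
  have hsplit : ∀ {b r : ℝ}, 0 ≤ b → 0 < r →
      ENNReal.ofReal (b * r ^ d) = ENNReal.ofReal b * ENNReal.ofReal r ^ d := fun hb hr => by
    rw [ENNReal.ofReal_mul hb, ENNReal.ofReal_rpow_of_pos hr]
  refine ⟨Real.toNNReal C₀⁻¹, Real.toNNReal (C₀ * 2 ^ d), by simpa using one_pos.trans hC₀,
    fun z ρ hρ => ?_, fun w hw ρ hρ => ?_, ae_restrict_mem hclosed.measurableSet⟩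
  · rw [Measure.restrict_apply measurableSet_closedBall]
    rcases (closedBall z ρ ∩ S).eq_empty_or_nonempty with hempty | ⟨w, hwz, hwS⟩
    · simp [hempty]
    have hsub : closedBall z ρ ⊆ closedBall w (2 * ρ) :=
      closedBall_subset_closedBall' (by linarith [mem_closedBall'.1 hwz])
    calc μH[d] (closedBall z ρ ∩ S) ≤ μH[d] (closedBall w (2 * ρ) ∩ S) := by gcongr
      _ ≤ ENNReal.ofReal (C₀ * (2 * ρ) ^ d) :=
          (hreg w hwS (2 * ρ) (by linarith [hρ.1]) (by linarith [hρ.2])).2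
      _ = ENNReal.ofReal (C₀ * 2 ^ d) * ENNReal.ofReal ρ ^ d := by
          rw [Real.mul_rpow zero_le_two hρ.1.le, ← mul_assoc, hsplit (by positivity) hρ.1]
  · rw [Measure.restrict_apply measurableSet_closedBall]
    exact (hsplit (by positivity) hρ.1).symm.trans_le (hreg w hw ρ hρ.1 (by linarith [hρ.2])).1

lemma preimage_inv_smul_sub_closedBall {E : Type*} [NormedAddCommGroup E] [NormedSpace ℝ E]
    (w z : E) {r : ℝ} (hr : 0 < r) (ρ : ℝ) :
    (fun y => r⁻¹ • (y - w)) ⁻¹' closedBall z ρ = closedBall (w + r • z) (r * ρ) := by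
  ext y
  have h : r⁻¹ • (y - w) - z = r⁻¹ • (y - (w + r • z)) := by
    rw [← sub_sub, smul_sub _ (y - w), inv_smul_smul₀ hr.ne']
  rw [mem_preimage, mem_closedBall_iff_norm, mem_closedBall_iff_norm, h, norm_smul, norm_inv,
    Real.norm_of_nonneg hr.le, inv_mul_le_iff₀ hr]

lemma ofReal_rpow_neg_mul_rpow {r : ℝ} (hr : 0 < r) (d : ℝ) :
    ENNReal.ofReal r ^ (-d) * ENNReal.ofReal r ^ d = 1 := by
  rw [ENNReal.rpow_neg, ENNReal.inv_mul_cancel (by simp [hr]) (by simp [hr])]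

variable {σ : Type*} [Fintype σ] {d : ℝ}

lemma IsFrostman.smul_map_inv_smul_sub {C : ℝ≥0} {μ : Measure (σ → ℝ)} (hμ : IsFrostman d C μ)
    (w : σ → ℝ) {r : ℝ} (hr : r ∈ Ioc (0 : ℝ) 1) :
    IsFrostman d C (ENNReal.ofReal r ^ (-d) • μ.map fun y => r⁻¹ • (y - w)) := by
  intro z ρ hρ
  rw [Measure.smul_apply, Measure.map_apply (by fun_prop) measurableSet_closedBall,
    preimage_inv_smul_sub_closedBall w z hr.1, smul_eq_mul]
  calc ENNReal.ofReal r ^ (-d) * μ (closedBall (w + r • z) (r * ρ))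
      ≤ ENNReal.ofReal r ^ (-d) * (C * ENNReal.ofReal (r * ρ) ^ d) := by
        gcongr
        exact hμ _ _ ⟨mul_pos hr.1 hρ.1, (mul_le_of_le_one_left hρ.1.le hr.2).trans hρ.2⟩
    _ = (ENNReal.ofReal r ^ (-d) * ENNReal.ofReal r ^ d) * (C * ENNReal.ofReal ρ ^ d) := by
        rw [ENNReal.ofReal_mul hr.1.le, ENNReal.mul_rpow_of_ne_top (by simp) (by simp)]
        ring
    _ = C * ENNReal.ofReal ρ ^ d := by rw [ofReal_rpow_neg_mul_rpow hr.1, one_mul]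

theorem exists_enorm_eval_rpow_le_mul_setLIntegral_closedBall [Nonempty σ]
    (hd : (Fintype.card σ : ℝ) - 1 < d) {a : ℝ≥0} (ha : 0 < a) (C : ℝ≥0) (m : ℕ) {p : ℝ}
    (hp : 0 < p) :
    ∃ K : ℝ≥0∞, K ≠ ⊤ ∧ ∀ {S : Set (σ → ℝ)} {μ : Measure (σ → ℝ)}, IsAhlforsRegular S d a C μ →
      ∀ w ∈ S, ∀ r ∈ Ioc (0 : ℝ) (1 / 2), ∀ P : MvPolynomial σ ℝ, P.totalDegree ≤ m →
      ∀ x ∈ closedBall w r, ‖eval x P‖ₑ ^ p ≤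
        K * (ENNReal.ofReal r ^ (-d) * ∫⁻ y in closedBall w r, ‖eval y P‖ₑ ^ p ∂μ) := by
  obtain ⟨K, hK, hunit⟩ := exists_enorm_eval_rpow_le_mul_setLIntegral_unitBall hd C
    (ε := a / 2) (by simpa using ha.ne') (by finiteness) m hp
  refine ⟨K, hK, fun {S μ} hμ w hw r hr P hP x hx => ?_⟩
  set φ : (σ → ℝ) → σ → ℝ := fun y => r⁻¹ • (y - w)
  have hφ : Measurable φ := by fun_prop
  have hball : φ ⁻¹' closedBall 0 1 = closedBall w r := by
    simp [φ, preimage_inv_smul_sub_closedBall w 0 hr.1]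
  obtain ⟨Q, hQ, hQP⟩ := exists_eval_eq_eval_add_smul P w r
  have hQφ : ∀ y, eval (φ y) Q = eval y P := fun y => by
    rw [hQP, smul_inv_smul₀ hr.1.ne', add_sub_cancel]
  have hmass : (a / 2 + a / 2 : ℝ≥0∞) ≤
      (ENNReal.ofReal r ^ (-d) • μ.map φ) (closedBall 0 1) := by
    rw [Measure.smul_apply, Measure.map_apply hφ measurableSet_closedBall, hball, smul_eq_mul,
      ENNReal.add_halves]
    calc (a : ℝ≥0∞) = ENNReal.ofReal r ^ (-d) * (a * ENNReal.ofReal r ^ d) := by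
          rw [mul_left_comm, ofReal_rpow_neg_mul_rpow hr.1, mul_one]
      _ ≤ ENNReal.ofReal r ^ (-d) * μ (closedBall w r) := by
          gcongr
          exact hμ.le_measure_closedBall w hw r hr
  have h := hunit _ (hμ.isFrostman.smul_map_inv_smul_sub w ⟨hr.1, by linarith [hr.2]⟩) hmass Q
    (hQ.trans hP) (φ x) (by rwa [← mem_preimage, hball])
  rw [Measure.restrict_smul, lintegral_smul_measure,
    setLIntegral_map measurableSet_closedBall
      ((continuous_eval Q).enorm.measurable.pow_const p) hφ, hball] at h
  simpa only [hQφ, smul_eq_mul] using h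

end AhlforsRegular

section DyadicWeights

lemma two_rpow_add (a b : ℝ) : (2 : ℝ≥0∞) ^ (a + b) = 2 ^ a * 2 ^ b :=
  ENNReal.rpow_add _ _ two_ne_zero ENNReal.ofNat_ne_top

lemma two_rpow_ne_top (t : ℝ) : (2 : ℝ≥0∞) ^ t ≠ ⊤ :=
  ENNReal.rpow_ne_top_of_ne_zero two_ne_zero ENNReal.ofNat_ne_top

lemma ofReal_half_pow_rpow (j : ℕ) (t : ℝ) :
    ENNReal.ofReal ((1 / 2) ^ j) ^ t = 2 ^ (-(t * j)) := by
  rw [ENNReal.ofReal_pow (by norm_num), one_div, ENNReal.ofReal_inv_of_pos two_pos,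
    ENNReal.ofReal_ofNat, ← ENNReal.rpow_natCast, ← ENNReal.rpow_mul, ENNReal.inv_rpow,
    ← ENNReal.rpow_neg, mul_comm]

lemma tsum_two_rpow_neg_ne_top {θ : ℝ} (hθ : 0 < θ) :
    ∑' i : ℕ, (2 : ℝ≥0∞) ^ (-(θ * i)) ≠ ⊤ := by
  have hlt : (2 : ℝ≥0∞) ^ (-θ) < 1 :=
    ENNReal.rpow_lt_one_of_one_lt_of_neg ENNReal.one_lt_two (neg_neg_of_pos hθ)
  have hgeom : ∀ i : ℕ, (2 : ℝ≥0∞) ^ (-(θ * i)) = (2 ^ (-θ)) ^ i := fun i => by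
    rw [← ENNReal.rpow_natCast, ← ENNReal.rpow_mul, neg_mul]
  simp only [hgeom, ENNReal.tsum_geometric]
  exact ENNReal.inv_ne_top.2 (tsub_pos_of_lt hlt).ne'

lemma tsum_rpow_le_mul_tsum_two_rpow_mul {p : ℝ} (hp : 0 < p) (η : ℝ) (a : ℕ → ℝ≥0∞) :
    (∑' i, a i) ^ p ≤
      (∑' i : ℕ, 2 ^ (-(η / p * i))) ^ p * ∑' i : ℕ, 2 ^ (η * i) * a i ^ p := by
  set X := ∑' i : ℕ, 2 ^ (η * i) * a i ^ p
  have hterm : ∀ i : ℕ, a i ≤ 2 ^ (-(η / p * i)) * X ^ p⁻¹ := fun i => by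
    calc a i = 2 ^ (-(η / p * i)) * (2 ^ (η * i) * a i ^ p) ^ p⁻¹ := by
          rw [ENNReal.mul_rpow_of_nonneg _ _ (inv_nonneg.2 hp.le), ENNReal.rpow_rpow_inv hp.ne',
            ← ENNReal.rpow_mul, ← mul_assoc, ← two_rpow_add]
          ring_nf
          rw [ENNReal.rpow_zero, one_mul]
      _ ≤ 2 ^ (-(η / p * i)) * X ^ p⁻¹ := by
          gcongr
          exact ENNReal.le_tsum (f := fun i : ℕ => 2 ^ (η * i) * a i ^ p) i
  calc (∑' i, a i) ^ p ≤ (∑' i : ℕ, 2 ^ (-(η / p * i)) * X ^ p⁻¹) ^ p := by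
        gcongr with i
        exact hterm i
    _ = (∑' i : ℕ, 2 ^ (-(η / p * i))) ^ p * X := by
        rw [ENNReal.tsum_mul_right, ENNReal.mul_rpow_of_nonneg _ _ hp.le,
          ENNReal.rpow_inv_rpow hp.ne']

end DyadicWeights

section Averages

lemma enorm_sub_rpow_le {E : Type*} [SeminormedAddCommGroup E] {p : ℝ} (hp : 1 ≤ p) (a b c : E) :
    ‖a - c‖ₑ ^ p ≤ 2 ^ (p - 1) * (‖a - b‖ₑ ^ p + ‖c - b‖ₑ ^ p) := by
  refine le_trans ?_ (ENNReal.rpow_add_le_mul_rpow_add_rpow _ _ hp)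
  gcongr
  rw [← sub_sub_sub_cancel_right a c b]
  exact enorm_sub_le

lemma enorm_average_rpow_le {α E : Type*} [MeasurableSpace α] [NormedAddCommGroup E]
    [NormedSpace ℝ E] {μ : Measure α} [IsFiniteMeasure μ] {u : α → E}
    (hu : AEStronglyMeasurable u μ) {p : ℝ} (hp : 1 ≤ p) :
    ‖⨍ x, u x ∂μ‖ₑ ^ p ≤ ⨍⁻ x, ‖u x‖ₑ ^ p ∂μ := by
  have hp0 : 0 < p := by linarith
  rcases eq_or_ne μ 0 with rfl | hμ
  · simp [hp0]
  have : NeZero μ := ⟨hμ⟩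
  set ν := (μ univ)⁻¹ • μ
  have hν : AEStronglyMeasurable u ν := hu.smul_measure _
  calc ‖⨍ x, u x ∂μ‖ₑ ^ p ≤ eLpNorm' u 1 ν ^ p := by
        gcongr
        exact (enorm_integral_le_lintegral_enorm (μ := ν) u).trans_eq (by simp [eLpNorm'])
    _ ≤ eLpNorm' u p ν ^ p := by
        gcongr
        exact eLpNorm'_le_eLpNorm'_of_exponent_le one_pos hp ν hν
    _ = ⨍⁻ x, ‖u x‖ₑ ^ p ∂μ := (lintegral_rpow_enorm_eq_rpow_eLpNorm' hp0).symm

lemma setAverage_closedBall_eq {E F : Type*} [NormedAddCommGroup E] [NormedSpace ℝ E]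
    [FiniteDimensional ℝ E] [MeasurableSpace E] [BorelSpace E] [NormedAddCommGroup F]
    [NormedSpace ℝ F] (μ : Measure E) [μ.IsAddHaarMeasure] (g : E → F) (y : E) {r : ℝ}
    (hr : 0 < r) :
    ⨍ x in closedBall y r, g x ∂μ = ⨍ z in closedBall (0 : E) 1, g (y + r • z) ∂μ := by
  have htranslate : ∫ x in closedBall (0 : E) r, g (y + x) ∂μ = ∫ x in closedBall y r, g x ∂μ := by
    have h := (measurePreserving_add_left μ y).setIntegral_preimage_emb
      (measurableEmbedding_addLeft y) g (closedBall y r)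
    rwa [preimage_add_closedBall, sub_self] at h
  rw [setAverage_eq, setAverage_eq,
    Measure.setIntegral_comp_smul_of_pos μ (fun v => g (y + v)) _ hr, smul_unitClosedBall,
    Real.norm_of_nonneg hr.le, htranslate, smul_smul, μ.addHaar_real_closedBall' y hr.le,
    mul_inv, mul_comm]

lemma setLAverage_closedBall_le {E : Type*} [NormedAddCommGroup E] [NormedSpace ℝ E]
    [FiniteDimensional ℝ E] [MeasurableSpace E] [BorelSpace E] (μ : Measure E)
    [μ.IsAddHaarMeasure] (g : E → ℝ≥0∞) {x y : E} {r c : ℝ} (hr : 0 < r) (hc : 0 < c)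
    (h : closedBall x r ⊆ closedBall y (c * r)) :
    ⨍⁻ z in closedBall x r, g z ∂μ ≤
      ENNReal.ofReal c ^ Module.finrank ℝ E * ⨍⁻ z in closedBall y (c * r), g z ∂μ := by
  have hvol : (μ (closedBall x r))⁻¹ =
      ENNReal.ofReal c ^ Module.finrank ℝ E * (μ (closedBall y (c * r)))⁻¹ := by
    have h0 : μ (closedBall x r) ≠ 0 := (measure_closedBall_pos μ x hr).ne'
    rw [μ.addHaar_closedBall_mul_of_pos y hc, ENNReal.ofReal_pow hc.le,
      ← μ.addHaar_closedBall_center x,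
      ENNReal.mul_inv (.inr measure_closedBall_lt_top.ne) (.inr h0), ← mul_assoc,
      ENNReal.mul_inv_cancel (by simp [hc]) (by finiteness), one_mul]
  rw [setLAverage_eq, setLAverage_eq, ENNReal.div_eq_inv_mul, ENNReal.div_eq_inv_mul, hvol,
    mul_assoc]
  gcongr

end Averages

section LocalError

variable {σ : Type*} [Fintype σ] {m : ℕ} {p : ℝ} {f : (σ → ℝ) → ℝ} {x y : σ → ℝ} {r : ℝ}

/-- The `p`-th power of the normalized local best `L^p` approximation of `f` on `closedBall x r`
by polynomials of degree at most `m`; see `localApprox_rpow`. -/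
def localError (m : ℕ) (p : ℝ) (f : (σ → ℝ) → ℝ) (x : σ → ℝ) (r : ℝ) : ℝ≥0∞ :=
  ⨅ P : {P : MvPolynomial σ ℝ // P.totalDegree ≤ m},
    ⨍⁻ y in closedBall x r, ‖f y - MvPolynomial.eval y P.1‖ₑ ^ p ∂volume

instance : Nonempty {P : MvPolynomial σ ℝ // P.totalDegree ≤ m} :=
  ⟨0, by simp⟩

lemma localApprox_rpow {n : ℕ} (k : ℕ) (hp : 0 < p) (f : Rn n → ℝ) (x : Rn n) (r : ℝ) :
    localApprox k p f x r ^ p = localError (k - 1) p f x r := by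
  have h := (ENNReal.orderIsoRpow p hp).map_iInf
    fun P : {P : MvPolynomial (Fin n) ℝ // P.totalDegree ≤ k - 1} =>
      ((volume (closedBall x r))⁻¹ *
        ∫⁻ y in closedBall x r, ENNReal.ofReal |f y - MvPolynomial.eval y P.1| ^ p) ^ (1 / p)
  simp only [ENNReal.orderIsoRpow_apply, one_div, ENNReal.rpow_inv_rpow hp.ne'] at h
  simpa only [localApprox, localError, iInf_subtype', one_div, setLAverage_eq,
    ENNReal.div_eq_inv_mul, Real.enorm_eq_ofReal_abs] using h

lemma le_mul_localError_add {X c R : ℝ≥0∞} (hc : c ≠ ⊤)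
    (h : ∀ P : MvPolynomial σ ℝ, P.totalDegree ≤ m →
      X ≤ c * ((⨍⁻ y in closedBall x r, ‖f y - MvPolynomial.eval y P‖ₑ ^ p ∂volume) + R)) :
    X ≤ c * (localError m p f x r + R) := by
  rw [localError, ENNReal.iInf_add, ENNReal.mul_iInf fun hc' => absurd hc' hc]
  exact le_iInf fun P => h P.1 P.2

lemma localError_le_mul_localError {c : ℝ} (hr : 0 < r) (hc : 0 < c)
    (h : closedBall x r ⊆ closedBall y (c * r)) :
    localError m p f x r ≤ ENNReal.ofReal c ^ Fintype.card σ * localError m p f y (c * r) := by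
  rw [← Module.finrank_fintype_fun_eq_card (R := ℝ), localError, localError,
    ENNReal.mul_iInf fun hc' => absurd hc' (by finiteness)]
  exact iInf_mono fun P => setLAverage_closedBall_le _ _ hr hc h

lemma upperSemicontinuous_measure_closedBall {X : Type*} [PseudoMetricSpace X]
    [MeasurableSpace X] [OpensMeasurableSpace X] {ν : Measure X}
    (hν : ∀ x r, ν (closedBall x r) ≠ ⊤) (r : ℝ) :
    UpperSemicontinuous fun x => ν (closedBall x r) := by
  intro x b hb
  have hInter : ⋂ t > r, closedBall x t = closedBall x r := by
    ext z
    simp only [mem_iInter, mem_closedBall]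
    exact ⟨fun h => le_of_forall_gt_imp_ge_of_dense h, fun h t ht => h.trans ht.le⟩
  have hlim : Tendsto (fun t => ν (closedBall x t)) (𝓝[>] r) (𝓝 (ν (closedBall x r))) := by
    rw [← hInter]
    exact tendsto_measure_biInter_gt (fun t _ => measurableSet_closedBall.nullMeasurableSet)
      (fun i j _ hij => closedBall_subset_closedBall hij) ⟨r + 1, lt_add_one r, hν _ _⟩
  obtain ⟨t, htb, hrt⟩ := ((hlim.eventually (gt_mem_nhds hb)).and self_mem_nhdsWithin).exists
  filter_upwards [ball_mem_nhds x (sub_pos.2 hrt)] with z hz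
  refine (measure_mono (closedBall_subset_closedBall' ?_)).trans_lt htb
  linarith [mem_ball.1 hz]

lemma setLIntegral_enorm_sub_eval_rpow_ne_top (hp : 0 < p) (hf : MemLp f (ENNReal.ofReal p))
    (P : MvPolynomial σ ℝ) (x : σ → ℝ) (r : ℝ) :
    ∫⁻ y in closedBall x r, ‖f y - MvPolynomial.eval y P‖ₑ ^ p ≠ ⊤ := by
  have hP := MvPolynomial.continuous_eval P
  obtain ⟨B, hB⟩ := (isCompact_closedBall x r).exists_bound_of_continuousOn hP.continuousOn
  have : IsFiniteMeasure (volume.restrict (closedBall x r)) :=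
    ⟨by simpa using measure_closedBall_lt_top⟩
  have hPLp : MemLp (fun y => MvPolynomial.eval y P) (ENNReal.ofReal p)
      (volume.restrict (closedBall x r)) :=
    MemLp.of_bound hP.aestronglyMeasurable B (ae_restrict_of_forall_mem measurableSet_closedBall hB)
  have h := lintegral_rpow_enorm_lt_top_of_eLpNorm_lt_top (by simpa using hp) ENNReal.ofReal_ne_top
    ((hf.restrict _).sub hPLp).eLpNorm_lt_top
  rw [ENNReal.toReal_ofReal hp.le] at h
  exact h.ne

lemma measurable_localError (hp : 0 < p) (hf : MemLp f (ENNReal.ofReal p)) (m : ℕ) (hr : 0 < r) :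
    Measurable fun x => localError m p f x r := by
  refine (upperSemicontinuous_iInf fun P => ?_).measurable
  set ν := (volume (closedBall (0 : σ → ℝ) r))⁻¹ •
    volume.withDensity fun y => ‖f y - MvPolynomial.eval y P.1‖ₑ ^ p
  have hν : ∀ x t, ν (closedBall x t) = (volume (closedBall (0 : σ → ℝ) r))⁻¹ *
      ∫⁻ y in closedBall x t, ‖f y - MvPolynomial.eval y P.1‖ₑ ^ p := fun x t => by
    rw [Measure.smul_apply, withDensity_apply _ measurableSet_closedBall, smul_eq_mul]
  have hfin : ∀ x t, ν (closedBall x t) ≠ ⊤ := fun x t => by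
    rw [hν]
    exact ENNReal.mul_ne_top (ENNReal.inv_ne_top.2 (measure_closedBall_pos _ _ hr).ne')
      (setLIntegral_enorm_sub_eval_rpow_ne_top hp hf _ _ _)
  have haverage : ∀ x, ⨍⁻ y in closedBall x r, ‖f y - MvPolynomial.eval y P.1‖ₑ ^ p ∂volume =
      ν (closedBall x r) := fun x => by
    rw [hν, setLAverage_eq, ENNReal.div_eq_inv_mul, Measure.addHaar_closedBall_center]
  simpa only [haverage] using upperSemicontinuous_measure_closedBall hfin r

/-- The `p`-th power of the dyadic version of the sharp maximal function of smoothness `t / p`. -/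
def dyadicSharp (m : ℕ) (t p : ℝ) (f : (σ → ℝ) → ℝ) (x : σ → ℝ) : ℝ≥0∞ :=
  ⨆ j : ℕ, 2 ^ (t * j) * localError m p f x ((1 / 2) ^ j)

lemma measurable_dyadicSharp (hp : 0 < p) (hf : MemLp f (ENNReal.ofReal p)) (m : ℕ) (t : ℝ) :
    Measurable (dyadicSharp m t p f) :=
  .iSup fun _ => (measurable_localError hp hf m (by positivity)).const_mul _

lemma localError_le_mul_dyadicSharp (t : ℝ) (j : ℕ) :
    localError m p f x ((1 / 2) ^ j) ≤ 2 ^ (-(t * j)) * dyadicSharp m t p f x := by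
  calc localError m p f x ((1 / 2) ^ j)
      = 2 ^ (-(t * j)) * (2 ^ (t * j) * localError m p f x ((1 / 2) ^ j)) := by
        rw [← mul_assoc, ← two_rpow_add, neg_add_cancel, ENNReal.rpow_zero, one_mul]
    _ ≤ 2 ^ (-(t * j)) * dyadicSharp m t p f x := by
        gcongr
        exact le_iSup (fun j : ℕ => 2 ^ (t * j) * localError m p f x ((1 / 2) ^ j)) j

end LocalError

section RichardsonAverage

variable {σ : Type*} [Fintype σ] {m : ℕ} {p η : ℝ} {f g : (σ → ℝ) → ℝ} {y : σ → ℝ} {r : ℝ}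

/-- The Richardson extrapolation of the averages of `f` over the concentric cubes of radii
`(1 / 2) ^ l * r`: the combination that reproduces polynomials of degree at most `m`. -/
def richardsonAverage (m : ℕ) (f : (σ → ℝ) → ℝ) (y : σ → ℝ) (r : ℝ) : ℝ :=
  ∑ l ∈ Finset.range (m + 1), richardsonCoeff m l * ⨍ x in closedBall y ((1 / 2) ^ l * r), f x

lemma sum_richardsonCoeff (m : ℕ) : ∑ l ∈ Finset.range (m + 1), richardsonCoeff m l = 1 := by
  simpa using sum_richardsonCoeff_mul_eval (σ := Fin 0) (m := m) (P := 1) (by simp) 0 0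

lemma richardsonAverage_eval {P : MvPolynomial σ ℝ} (hP : P.totalDegree ≤ m) (y : σ → ℝ)
    (hr : 0 < r) :
    richardsonAverage m (fun x => MvPolynomial.eval x P) y r = MvPolynomial.eval y P := by
  have hint : ∀ l : ℕ, IntegrableOn
      (fun z : σ → ℝ => richardsonCoeff m l * MvPolynomial.eval (y + (1 / 2 : ℝ) ^ l • r • z) P)
      (closedBall 0 1) := fun l =>
    (((MvPolynomial.continuous_eval P).comp (by fun_prop)).const_mul _).continuousOn
      |>.integrableOn_compact (isCompact_closedBall 0 1)
  calc richardsonAverage m (fun x => MvPolynomial.eval x P) y r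
      = ∑ l ∈ Finset.range (m + 1), ⨍ z in closedBall (0 : σ → ℝ) 1,
          richardsonCoeff m l * MvPolynomial.eval (y + (1 / 2 : ℝ) ^ l • r • z) P := by
        refine Finset.sum_congr rfl fun l _ => ?_
        rw [setAverage_closedBall_eq _ _ _ (by positivity), average, average, integral_const_mul]
        simp only [smul_smul]
    _ = ⨍ z in closedBall (0 : σ → ℝ) 1, ∑ l ∈ Finset.range (m + 1),
          richardsonCoeff m l * MvPolynomial.eval (y + (1 / 2 : ℝ) ^ l • r • z) P :=
        (integral_finsetSum _ fun l _ => (hint l).to_average).symm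
    _ = MvPolynomial.eval y P := by
        simp only [sum_richardsonCoeff_mul_eval hP]
        exact setAverage_const (measure_closedBall_pos _ _ one_pos).ne'
          measure_closedBall_lt_top.ne _

lemma richardsonAverage_sub (hf : LocallyIntegrable f) (hg : LocallyIntegrable g) (m : ℕ)
    (y : σ → ℝ) (r : ℝ) :
    richardsonAverage m (f - g) y r = richardsonAverage m f y r - richardsonAverage m g y r := by
  simp only [richardsonAverage, ← Finset.sum_sub_distrib, ← mul_sub]
  refine Finset.sum_congr rfl fun l _ => congrArg _ ?_
  exact integral_sub (hf.integrableOn_isCompact (isCompact_closedBall _ _)).to_average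
    (hg.integrableOn_isCompact (isCompact_closedBall _ _)).to_average

lemma enorm_average_closedBall_half_pow_mul_rpow_le (hf : AEStronglyMeasurable f) (hp : 1 ≤ p)
    (y : σ → ℝ) (hr : 0 < r) (l : ℕ) :
    ‖⨍ x in closedBall y ((1 / 2) ^ l * r), f x‖ₑ ^ p ≤
      ENNReal.ofReal (2 ^ l) ^ Fintype.card σ * ⨍⁻ x in closedBall y r, ‖f x‖ₑ ^ p ∂volume := by
  have : IsFiniteMeasure (volume.restrict (closedBall y ((1 / 2) ^ l * r))) :=
    ⟨by simpa using measure_closedBall_lt_top⟩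
  have hscale : (2 : ℝ) ^ l * ((1 / 2) ^ l * r) = r := by
    rw [← mul_assoc, ← mul_pow, mul_one_div_cancel two_ne_zero, one_pow, one_mul]
  have hcompare := setLAverage_closedBall_le (volume : Measure (σ → ℝ)) (fun x => ‖f x‖ₑ ^ p)
    (x := y) (y := y) (r := (1 / 2) ^ l * r) (c := 2 ^ l) (by positivity) (by positivity)
    (closedBall_subset_closedBall
      (le_mul_of_one_le_left (by positivity) (one_le_pow₀ one_le_two)))
  rw [Module.finrank_fintype_fun_eq_card, hscale] at hcompare
  exact (enorm_average_rpow_le hf.restrict hp).trans hcompare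

lemma exists_enorm_richardsonAverage_rpow_le (σ : Type*) [Fintype σ] (m : ℕ) (hp : 1 ≤ p) :
    ∃ K : ℝ≥0∞, K ≠ ⊤ ∧ ∀ f : (σ → ℝ) → ℝ, AEStronglyMeasurable f → ∀ y, ∀ r > 0,
      ‖richardsonAverage m f y r‖ₑ ^ p ≤ K * ⨍⁻ x in closedBall y r, ‖f x‖ₑ ^ p ∂volume := by
  have hp0 : 0 < p := by linarith
  set Λ := ∑ l ∈ Finset.range (m + 1), ‖richardsonCoeff m l‖ₑ
  have hΛ : Λ ≠ ⊤ := ENNReal.sum_ne_top.2 fun _ _ => enorm_ne_top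
  refine ⟨Λ ^ p * ENNReal.ofReal (2 ^ m) ^ Fintype.card σ, by finiteness, fun f hf y r hr => ?_⟩
  set A := ENNReal.ofReal (2 ^ m) ^ Fintype.card σ * ⨍⁻ x in closedBall y r, ‖f x‖ₑ ^ p ∂volume
  have haverage : ∀ l ∈ Finset.range (m + 1),
      ‖⨍ x in closedBall y ((1 / 2) ^ l * r), f x‖ₑ ≤ A ^ p⁻¹ := fun l hl => by
    rw [ENNReal.le_rpow_inv_iff hp0]
    refine (enorm_average_closedBall_half_pow_mul_rpow_le hf hp y hr l).trans ?_
    simp only [A]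
    gcongr
    · exact one_le_two
    · exact Nat.lt_succ_iff.1 (Finset.mem_range.1 hl)
  calc ‖richardsonAverage m f y r‖ₑ ^ p
      ≤ (∑ l ∈ Finset.range (m + 1), ‖richardsonCoeff m l‖ₑ * A ^ p⁻¹) ^ p := by
        gcongr
        refine (enorm_sum_le _ _).trans (Finset.sum_le_sum fun l hl => ?_)
        rw [enorm_mul]
        gcongr
        exact haverage l hl
    _ = Λ ^ p * A := by
        rw [← Finset.sum_mul, ENNReal.mul_rpow_of_nonneg _ _ hp0.le, ENNReal.rpow_inv_rpow hp0.ne']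
    _ = Λ ^ p * ENNReal.ofReal (2 ^ m) ^ Fintype.card σ *
          ⨍⁻ x in closedBall y r, ‖f x‖ₑ ^ p ∂volume := (mul_assoc _ _ _).symm

lemma tendsto_richardsonAverage {L : ℝ}
    (h : Tendsto (fun r => ⨍ x in closedBall y r, f x) (𝓝[>] 0) (𝓝 L)) (m : ℕ) (hr : 0 < r) :
    Tendsto (fun i : ℕ => richardsonAverage m f y ((1 / 2) ^ i * r)) atTop (𝓝 L) := by
  have hradius : ∀ l : ℕ, Tendsto (fun i : ℕ => (1 / 2 : ℝ) ^ l * ((1 / 2) ^ i * r)) atTop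
      (𝓝[>] 0) := fun l => by
    refine tendsto_nhdsWithin_iff.2 ⟨?_, .of_forall fun i => mem_Ioi.2 (by positivity)⟩
    simpa using ((tendsto_pow_atTop_nhds_zero_of_lt_one one_half_pos.le
      one_half_lt_one).mul_const r).const_mul ((1 / 2 : ℝ) ^ l)
  have hL : L = ∑ l ∈ Finset.range (m + 1), richardsonCoeff m l * L := by
    rw [← Finset.sum_mul, sum_richardsonCoeff, one_mul]
  rw [hL]
  exact tendsto_finsetSum _ fun l _ => (h.comp (hradius l)).const_mul _

lemma exists_enorm_richardsonAverage_sub_eval_rpow_le (σ : Type*) [Fintype σ] (m : ℕ)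
    (hp : 1 ≤ p) :
    ∃ K : ℝ≥0∞, K ≠ ⊤ ∧ ∀ f : (σ → ℝ) → ℝ, LocallyIntegrable f → ∀ y, ∀ r > 0,
      ∀ P : MvPolynomial σ ℝ, P.totalDegree ≤ m →
      ‖richardsonAverage m f y r - MvPolynomial.eval y P‖ₑ ^ p ≤
        K * ⨍⁻ x in closedBall y r, ‖f x - MvPolynomial.eval x P‖ₑ ^ p ∂volume := by
  obtain ⟨K, hK, hbound⟩ := exists_enorm_richardsonAverage_rpow_le σ m hp
  refine ⟨K, hK, fun f hf y r hr P hP => ?_⟩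
  have hPint : LocallyIntegrable fun x => MvPolynomial.eval x P :=
    (MvPolynomial.continuous_eval P).locallyIntegrable
  rw [← richardsonAverage_eval hP y hr, ← richardsonAverage_sub hf hPint]
  exact hbound _ (hf.sub hPint).aestronglyMeasurable y r hr

lemma exists_enorm_richardsonAverage_sub_half_rpow_le (σ : Type*) [Fintype σ] (m : ℕ)
    (hp : 1 ≤ p) :
    ∃ K : ℝ≥0∞, K ≠ ⊤ ∧ ∀ f : (σ → ℝ) → ℝ, LocallyIntegrable f → ∀ y, ∀ r > 0,
      ‖richardsonAverage m f y r - richardsonAverage m f y (1 / 2 * r)‖ₑ ^ p ≤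
        K * localError m p f y r := by
  obtain ⟨K, hK, hbound⟩ := exists_enorm_richardsonAverage_sub_eval_rpow_le σ m hp
  have : 0 ≤ p - 1 := by linarith
  have hK' : 2 ^ (p - 1) * (K + K * ENNReal.ofReal 2 ^ Fintype.card σ) ≠ ⊤ := by finiteness
  refine ⟨_, hK', fun f hf y r hr => ?_⟩
  rw [← add_zero (localError m p f y r)]
  refine le_mul_localError_add hK' fun P hP => ?_
  have hhalf : ‖richardsonAverage m f y (1 / 2 * r) - MvPolynomial.eval y P‖ₑ ^ p ≤
      K * (ENNReal.ofReal 2 ^ Fintype.card σ *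
        ⨍⁻ x in closedBall y r, ‖f x - MvPolynomial.eval x P‖ₑ ^ p ∂volume) := by
    refine (hbound f hf y (1 / 2 * r) (by positivity) P hP).trans ?_
    gcongr
    have h := setLAverage_closedBall_le (volume : Measure (σ → ℝ))
      (fun x => ‖f x - MvPolynomial.eval x P‖ₑ ^ p) (x := y) (y := y) (half_pos hr) two_pos
      (closedBall_subset_closedBall (by linarith))
    rwa [Module.finrank_fintype_fun_eq_card, mul_div_cancel₀ r two_ne_zero, ← one_div_mul_eq_div]
      at h
  calc ‖richardsonAverage m f y r - richardsonAverage m f y (1 / 2 * r)‖ₑ ^ p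
      ≤ 2 ^ (p - 1) * (‖richardsonAverage m f y r - MvPolynomial.eval y P‖ₑ ^ p +
          ‖richardsonAverage m f y (1 / 2 * r) - MvPolynomial.eval y P‖ₑ ^ p) :=
        enorm_sub_rpow_le hp _ _ _
    _ ≤ 2 ^ (p - 1) *
          (K * (⨍⁻ x in closedBall y r, ‖f x - MvPolynomial.eval x P‖ₑ ^ p ∂volume) +
            K * (ENNReal.ofReal 2 ^ Fintype.card σ *
              ⨍⁻ x in closedBall y r, ‖f x - MvPolynomial.eval x P‖ₑ ^ p ∂volume)) := by
        gcongr
        exact hbound f hf y r hr P hP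
    _ = _ := by rw [add_zero]; ring

/-- The weighted sum of the local errors at all dyadic scales below `r`, which controls the
telescoping sum from scale `r` to the limit of the averages at `y`. -/
def multiscaleError (m : ℕ) (p η : ℝ) (f : (σ → ℝ) → ℝ) (y : σ → ℝ) (r : ℝ) : ℝ≥0∞ :=
  ∑' i : ℕ, 2 ^ (η * i) * localError m p f y ((1 / 2) ^ i * r)

lemma exists_enorm_richardsonAverage_sub_rpow_le (σ : Type*) [Fintype σ] (m : ℕ) (hp : 1 ≤ p)
    (hη : 0 < η) :
    ∃ K : ℝ≥0∞, K ≠ ⊤ ∧ ∀ f : (σ → ℝ) → ℝ, LocallyIntegrable f → ∀ y L,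
      Tendsto (fun r => ⨍ x in closedBall y r, f x) (𝓝[>] 0) (𝓝 L) → ∀ r > 0,
      ‖richardsonAverage m f y r - L‖ₑ ^ p ≤ K * multiscaleError m p η f y r := by
  obtain ⟨K, hK, hhalf⟩ := exists_enorm_richardsonAverage_sub_half_rpow_le σ m hp
  have hp0 : 0 < p := by linarith
  have hgeom := tsum_two_rpow_neg_ne_top (div_pos hη hp0)
  refine ⟨(∑' i : ℕ, 2 ^ (-(η / p * i))) ^ p * K, by finiteness, fun f hf y L hL r hr => ?_⟩
  set A : ℕ → ℝ := fun i => richardsonAverage m f y ((1 / 2) ^ i * r) with hA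
  have hstep : ∀ i, ‖A i - A (i + 1)‖ₑ ^ p ≤ K * localError m p f y ((1 / 2) ^ i * r) := fun i => by
    have h := hhalf f hf y ((1 / 2) ^ i * r) (by positivity)
    rwa [← mul_assoc, ← pow_succ'] at h
  calc ‖richardsonAverage m f y r - L‖ₑ ^ p = edist (A 0) L ^ p := by
        simp only [hA, edist_eq_enorm_sub, pow_zero, one_mul]
    _ ≤ (∑' i, ‖A i - A (i + 1)‖ₑ) ^ p := by
        gcongr
        exact edist_le_tsum_of_edist_le_of_tendsto₀ _
          (fun i => (edist_eq_enorm_sub _ _).le) (tendsto_richardsonAverage hL m hr)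
    _ ≤ (∑' i : ℕ, 2 ^ (-(η / p * i))) ^ p * ∑' i : ℕ, 2 ^ (η * i) * ‖A i - A (i + 1)‖ₑ ^ p :=
        tsum_rpow_le_mul_tsum_two_rpow_mul hp0 η _
    _ ≤ (∑' i : ℕ, 2 ^ (-(η / p * i))) ^ p *
          ∑' i : ℕ, 2 ^ (η * i) * (K * localError m p f y ((1 / 2) ^ i * r)) := by
        gcongr with i
        exact hstep i
    _ = (∑' i : ℕ, 2 ^ (-(η / p * i))) ^ p * K * multiscaleError m p η f y r := by
        simp only [multiscaleError, mul_left_comm _ K, ENNReal.tsum_mul_left, mul_assoc]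

lemma exists_enorm_sub_eval_rpow_le (σ : Type*) [Fintype σ] (m : ℕ) (hp : 1 ≤ p) (hη : 0 < η) :
    ∃ K : ℝ≥0∞, K ≠ ⊤ ∧ ∀ f : (σ → ℝ) → ℝ, LocallyIntegrable f → ∀ y L,
      Tendsto (fun r => ⨍ x in closedBall y r, f x) (𝓝[>] 0) (𝓝 L) → ∀ r > 0,
      ∀ P : MvPolynomial σ ℝ, P.totalDegree ≤ m →
      ‖L - MvPolynomial.eval y P‖ₑ ^ p ≤
        K * ((⨍⁻ x in closedBall y r, ‖f x - MvPolynomial.eval x P‖ₑ ^ p ∂volume) +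
          multiscaleError m p η f y r) := by
  obtain ⟨K₁, hK₁, heval⟩ := exists_enorm_richardsonAverage_sub_eval_rpow_le σ m hp
  obtain ⟨K₂, hK₂, hlim⟩ := exists_enorm_richardsonAverage_sub_rpow_le σ m hp hη
  have : 0 ≤ p - 1 := by linarith
  refine ⟨2 ^ (p - 1) * (K₁ + K₂), by finiteness, fun f hf y L hL r hr P hP => ?_⟩
  rw [mul_assoc]
  refine (enorm_sub_rpow_le hp L (richardsonAverage m f y r) _).trans ?_
  gcongr
  rw [enorm_sub_rev, enorm_sub_rev (MvPolynomial.eval y P), add_comm, mul_add]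
  gcongr
  · exact (heval f hf y r hr P hP).trans (by gcongr; exact le_self_add)
  · exact (hlim f hf y L hL r hr).trans (by gcongr; exact le_add_self)

lemma localError_le_multiscaleError : localError m p f y r ≤ multiscaleError m p η f y r := by
  refine le_trans (by simp) (ENNReal.le_tsum
    (f := fun i : ℕ => 2 ^ (η * i) * localError m p f y ((1 / 2) ^ i * r)) 0)

lemma multiscaleError_half_pow_mul_le (hη : 0 ≤ η) (c : ℕ) :
    multiscaleError m p η f y ((1 / 2) ^ c * r) ≤ multiscaleError m p η f y r := by
  refine le_trans (ENNReal.tsum_le_tsum fun i => ?_) (ENNReal.tsum_comp_le_tsum_of_injective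
    (add_left_injective c) fun i : ℕ => 2 ^ (η * i) * localError m p f y ((1 / 2) ^ i * r))
  rw [← mul_assoc, ← pow_add]
  gcongr
  · exact one_le_two
  · exact Nat.le_add_right i c

end RichardsonAverage

section Porosity

lemma setLIntegral_setLIntegral_closedBall {X : Type*} [PseudoMetricSpace X]
    [SecondCountableTopology X] [MeasurableSpace X] [OpensMeasurableSpace X] (μ ν : Measure X)
    [SFinite μ] [SFinite ν] (A : Set X) {g : X → ℝ≥0∞} (hg : Measurable g) (r : ℝ) :
    ∫⁻ x in A, (∫⁻ w in closedBall x r, g w ∂μ) ∂ν =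
      ∫⁻ w, g w * ν (closedBall w r ∩ A) ∂μ := by
  let D : Set (X × X) := {q | dist q.2 q.1 ≤ r}
  have hD : MeasurableSet D := measurableSet_le (by fun_prop) measurable_const
  have hinner : ∀ x, ∫⁻ w in closedBall x r, g w ∂μ =
      ∫⁻ w, D.indicator (fun q => g q.2) (x, w) ∂μ := fun x => by
    rw [← lintegral_indicator measurableSet_closedBall]
    rfl
  have hswap : ∀ w x, D.indicator (fun q => g q.2) (x, w) =
      (closedBall w r).indicator (fun _ => g w) x := fun w x => by
    simp only [D, indicator, mem_ofPred_eq, mem_closedBall, dist_comm w x]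
  simp only [hinner]
  have hmeas : Measurable (Function.uncurry fun x w => D.indicator (fun q => g q.2) (x, w)) :=
    (hg.comp measurable_snd).indicator hD
  rw [lintegral_lintegral_swap hmeas.aemeasurable]
  refine lintegral_congr fun w => ?_
  simp only [hswap]
  rw [lintegral_indicator measurableSet_closedBall, setLIntegral_const,
    Measure.restrict_apply measurableSet_closedBall]

lemma mul_measure_le_mul_measure_closedBall {X : Type*} [PseudoMetricSpace X]
    [SecondCountableTopology X] [MeasurableSpace X] [OpensMeasurableSpace X] {μ ν : Measure X}
    [SFinite μ] [SFinite ν] {V : Set X} (hVm : MeasurableSet V) {w : X} {t ρ : ℝ}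
    (hV : V ⊆ closedBall w t) {b v : ℝ≥0∞} (hb : ∀ y ∈ V, b ≤ μ (closedBall y ρ))
    (hv : ∀ z, ν (closedBall z ρ) ≤ v) : b * ν V ≤ v * μ (closedBall w (t + ρ)) := by
  have hupper : ∀ z, 1 * ν (closedBall z ρ ∩ V) ≤
      (closedBall w (t + ρ)).indicator (fun _ => v) z := fun z => by
    by_cases hz : z ∈ closedBall w (t + ρ)
    · rw [indicator_of_mem hz, one_mul]
      exact (measure_mono inter_subset_left).trans (hv z)
    · have hempty : closedBall z ρ ∩ V = ∅ := by
        refine eq_empty_iff_forall_notMem.2 fun y hy => hz ?_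
        rw [mem_closedBall, add_comm]
        exact (dist_triangle_left z w y).trans (add_le_add hy.1 (hV hy.2))
      simp [hempty]
  calc b * ν V = ∫⁻ _ in V, b ∂ν := by rw [setLIntegral_const]
    _ ≤ ∫⁻ y in V, (∫⁻ _ in closedBall y ρ, 1 ∂μ) ∂ν :=
        setLIntegral_mono' hVm fun y hy => (hb y hy).trans_eq (setLIntegral_one _).symm
    _ = ∫⁻ z, 1 * ν (closedBall z ρ ∩ V) ∂μ :=
        setLIntegral_setLIntegral_closedBall μ ν V measurable_const ρ
    _ ≤ ∫⁻ z, (closedBall w (t + ρ)).indicator (fun _ => v) z ∂μ := lintegral_mono hupper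
    _ = v * μ (closedBall w (t + ρ)) := by
        rw [lintegral_indicator measurableSet_closedBall, setLIntegral_const]

variable {σ : Type*} [Fintype σ] {S : Set (σ → ℝ)} {d : ℝ} {a C : ℝ≥0} {μ : Measure (σ → ℝ)}

lemma IsAhlforsRegular.volume_infDist_le_mul_le [SFinite μ] (hμ : IsAhlforsRegular S d a C μ)
    (hS : IsClosed S) {w : σ → ℝ} (hw : w ∈ S) {t δ : ℝ} (ht : t ≤ 1 / 4) (hδ : 0 < δ)
    (hδt : 2 * δ ≤ t) :
    a * ENNReal.ofReal δ ^ d * volume (closedBall w t ∩ {y | infDist y S ≤ δ}) ≤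
      ENNReal.ofReal (4 * δ) ^ Fintype.card σ * (C * ENNReal.ofReal (2 * t) ^ d) := by
  have hVm : MeasurableSet (closedBall w t ∩ {y | infDist y S ≤ δ}) :=
    measurableSet_closedBall.inter (measurableSet_le (by fun_prop) measurable_const)
  have hlower : ∀ y ∈ closedBall w t ∩ {y | infDist y S ≤ δ},
      a * ENNReal.ofReal δ ^ d ≤ μ (closedBall y (2 * δ)) := fun y hy => by
    obtain ⟨z, hzS, hyz⟩ := hS.exists_infDist_eq_dist ⟨w, hw⟩ y
    have hzy : dist z y ≤ δ := by rw [dist_comm, ← hyz]; exact hy.2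
    exact (hμ.le_measure_closedBall z hzS δ ⟨hδ, by linarith⟩).trans
      (measure_mono (closedBall_subset_closedBall' (by linarith)))
  have hvolume : ∀ z : σ → ℝ,
      volume (closedBall z (2 * δ)) ≤ ENNReal.ofReal (4 * δ) ^ Fintype.card σ := fun z => by
    rw [Real.volume_pi_closedBall _ (by positivity), ENNReal.ofReal_pow (by positivity),
      ← mul_assoc, show (2 * 2 : ℝ) = 4 by norm_num]
  refine (mul_measure_le_mul_measure_closedBall hVm inter_subset_left hlower hvolume).trans ?_
  gcongr
  exact (measure_mono (closedBall_subset_closedBall (by linarith))).trans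
    (hμ.isFrostman w (2 * t) ⟨by linarith, by linarith⟩)

lemma IsAhlforsRegular.volume_infDist_le_mul_le_of_small [SFinite μ]
    (hμ : IsAhlforsRegular S d a C μ) (hS : IsClosed S) {w : σ → ℝ} (hw : w ∈ S) {t κ : ℝ}
    (ht : t ∈ Ioc 0 (1 / 4)) (hκ : 0 < κ) (hκ2 : 2 * κ ≤ 1)
    (hκa : ENNReal.ofReal κ ^ (Fintype.card σ - d) ≤ a / (4 ^ Fintype.card σ * 2 ^ d * C)) :
    volume (closedBall w t ∩ {y | infDist y S ≤ κ * t}) ≤ ENNReal.ofReal t ^ Fintype.card σ := by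
  set n := Fintype.card σ
  have h := hμ.volume_infDist_le_mul_le hS hw ht.2 (mul_pos hκ ht.1) (by nlinarith [ht.1])
  have hκ0 : ENNReal.ofReal κ ≠ 0 := by simpa using hκ
  have hκt0 : ENNReal.ofReal (κ * t) ≠ 0 := by simpa using mul_pos hκ ht.1
  have hκn : ENNReal.ofReal κ ^ (n - d) * ENNReal.ofReal κ ^ d = ENNReal.ofReal κ ^ n := by
    rw [← ENNReal.rpow_add _ _ hκ0 ENNReal.ofReal_ne_top, sub_add_cancel, ENNReal.rpow_natCast]
  have hκt : ENNReal.ofReal (κ * t) ^ d = ENNReal.ofReal κ ^ d * ENNReal.ofReal t ^ d := by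
    rw [ENNReal.ofReal_mul hκ.le, ENNReal.mul_rpow_of_ne_top (by finiteness) (by finiteness)]
  have hbound : ENNReal.ofReal (4 * (κ * t)) ^ n * (C * ENNReal.ofReal (2 * t) ^ d) ≤
      a * ENNReal.ofReal (κ * t) ^ d * ENNReal.ofReal t ^ n := by
    calc ENNReal.ofReal (4 * (κ * t)) ^ n * (C * ENNReal.ofReal (2 * t) ^ d)
        = 4 ^ n * 2 ^ d * C * ENNReal.ofReal κ ^ (n - d) * ENNReal.ofReal (κ * t) ^ d *
            ENNReal.ofReal t ^ n := by
          rw [hκt, ENNReal.ofReal_mul zero_le_four, ENNReal.ofReal_mul hκ.le, mul_pow, mul_pow,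
            ← hκn, ENNReal.ofReal_mul zero_le_two,
            ENNReal.mul_rpow_of_ne_top (by finiteness) (by finiteness), ENNReal.ofReal_ofNat,
            ENNReal.ofReal_ofNat]
          ring
      _ ≤ a * ENNReal.ofReal (κ * t) ^ d * ENNReal.ofReal t ^ n := by
          gcongr
          exact ENNReal.mul_le_of_le_div' hκa
  refine (ENNReal.mul_le_mul_iff_right ?_ ?_).1 (h.trans hbound)
  · exact mul_ne_zero (by exact_mod_cast hμ.pos.ne')
      (ENNReal.rpow_pos (pos_iff_ne_zero.2 hκt0) (by finiteness)).ne'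
  · exact ENNReal.mul_ne_top (by finiteness) (ENNReal.rpow_ne_top_of_ne_zero hκt0 (by finiteness))

/-- `S` is porous at small scales: a ball centred on `S` stays away from `S`, by a fixed proportion
of its radius, on a set at least as large as a `Fintype.card σ`-dimensional cube of half its
size. The proportion is `(1 / 2) ^ M`. -/
def IsPorous (S : Set (σ → ℝ)) (M : ℕ) : Prop :=
  ∀ w ∈ S, ∀ t ∈ Ioc (0 : ℝ) (1 / 4),
    ENNReal.ofReal t ^ Fintype.card σ ≤
      volume (closedBall w t ∩ {y | (1 / 2) ^ M * t < infDist y S})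

lemma exists_half_pow_rpow_le {η : ℝ} (hη : 0 < η) {c : ℝ≥0∞} (hc : c ≠ 0) :
    ∃ M : ℕ, 1 ≤ M ∧ ENNReal.ofReal ((1 / 2) ^ M) ^ η ≤ c := by
  have hlim : Tendsto (fun M : ℕ => ENNReal.ofReal ((1 / 2) ^ M) ^ η) atTop (𝓝 0) := by
    have h := (ENNReal.continuous_rpow_const (y := η)).tendsto _ |>.comp
      (ENNReal.tendsto_ofReal (tendsto_pow_atTop_nhds_zero_of_lt_one
        (show (0 : ℝ) ≤ 1 / 2 by norm_num) (by norm_num)))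
    rwa [ENNReal.ofReal_zero, ENNReal.zero_rpow_of_pos hη] at h
  obtain ⟨M, hMc, hM⟩ := ((hlim.eventually (ge_mem_nhds (pos_iff_ne_zero.2 hc))).and
    (eventually_ge_atTop 1)).exists
  exact ⟨M, hM, hMc⟩

theorem IsAhlforsRegular.exists_isPorous [Nonempty σ] [SFinite μ]
    (hμ : IsAhlforsRegular S d a C μ) (hS : IsClosed S) (hd : d < Fintype.card σ) :
    ∃ M, IsPorous S M := by
  set n := Fintype.card σ with hn
  obtain ⟨M, hM1, hM⟩ := exists_half_pow_rpow_le (sub_pos.2 hd)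
    (c := a / (4 ^ n * 2 ^ d * C)) (ENNReal.div_pos (by exact_mod_cast hμ.pos.ne')
      (ENNReal.mul_ne_top (ENNReal.mul_ne_top (by finiteness) (two_rpow_ne_top d)) (by simp))).ne'
  refine ⟨M, fun w hw t ht => ?_⟩
  set κ : ℝ := (1 / 2) ^ M
  have hκ : 0 < κ := by positivity
  have hκ2 : 2 * κ ≤ 1 := by
    have := pow_le_pow_of_le_one (show (0 : ℝ) ≤ 1 / 2 by norm_num) (by norm_num) hM1
    linarith
  have hsmall := hμ.volume_infDist_le_mul_le_of_small hS hw ht hκ hκ2 hM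
  have hdouble : ENNReal.ofReal t ^ n + ENNReal.ofReal t ^ n ≤ volume (closedBall w t) := by
    rw [Real.volume_pi_closedBall _ ht.1.le, ← hn, ENNReal.ofReal_pow (by linarith [ht.1]),
      ENNReal.ofReal_mul zero_le_two, mul_pow, ← two_mul, ENNReal.ofReal_ofNat]
    gcongr
    exact le_self_pow (by norm_num) Fintype.card_ne_zero
  have hcover : volume (closedBall w t) ≤
      volume (closedBall w t ∩ {y | κ * t < infDist y S}) + ENNReal.ofReal t ^ n := by
    refine (measure_le_inter_add_sdiff _ _ {y | κ * t < infDist y S}).trans ?_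
    gcongr
    refine (measure_mono fun y hy => ?_).trans hsmall
    exact ⟨hy.1, mem_ofPred_eq ▸ not_lt.1 hy.2⟩
  exact (ENNReal.add_le_add_iff_right (by finiteness)).1 (hdouble.trans hcover)

end Porosity

section PointwiseEstimate

variable {σ : Type*} [Fintype σ] {d η p : ℝ}

lemma exists_enorm_sub_eval_rpow_le_of_dist_le (σ : Type*) [Fintype σ] (m : ℕ) (hp : 1 ≤ p)
    (hη : 0 < η) :
    ∃ K : ℝ≥0∞, K ≠ ⊤ ∧ ∀ f : (σ → ℝ) → ℝ, LocallyIntegrable f → ∀ y L,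
      Tendsto (fun r => ⨍ z in closedBall y r, f z) (𝓝[>] 0) (𝓝 L) → ∀ r > 0, ∀ x,
      dist y x ≤ 2 * r → ∀ P : MvPolynomial σ ℝ, P.totalDegree ≤ m →
      ‖L - MvPolynomial.eval y P‖ₑ ^ p ≤
        K * ((⨍⁻ z in closedBall x (4 * r), ‖f z - MvPolynomial.eval z P‖ₑ ^ p ∂volume) +
          multiscaleError m p η f y r) := by
  obtain ⟨K, hK, h⟩ := exists_enorm_sub_eval_rpow_le σ m hp hη
  have hc : (1 : ℝ≥0∞) ≤ ENNReal.ofReal 4 ^ Fintype.card σ := one_le_pow₀ (by norm_num)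
  refine ⟨K * ENNReal.ofReal 4 ^ Fintype.card σ, by finiteness,
    fun f hf y L hL r hr x hyx P hP => (h f hf y L hL r hr P hP).trans ?_⟩
  rw [mul_assoc, mul_add (ENNReal.ofReal 4 ^ _)]
  gcongr
  · rw [← Module.finrank_fintype_fun_eq_card (R := ℝ)]
    exact setLAverage_closedBall_le _ _ hr four_pos
      (closedBall_subset_closedBall' (by linarith))
  · exact le_mul_of_one_le_left' hc

lemma exists_enorm_eval_rpow_le_of_trace_eq_zero [Nonempty σ] (hd : Fintype.card σ - 1 < d)
    {a : ℝ≥0} (ha : 0 < a) (C : ℝ≥0) (m : ℕ) (hp : 1 ≤ p) (hη : 0 < η) :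
    ∃ K : ℝ≥0∞, K ≠ ⊤ ∧ ∀ {S : Set (σ → ℝ)} {μ : Measure (σ → ℝ)}, IsAhlforsRegular S d a C μ →
      ∀ f : (σ → ℝ) → ℝ, LocallyIntegrable f →
      (∀ᵐ w ∂μ, Tendsto (fun r => ⨍ y in closedBall w r, f y) (𝓝[>] 0) (𝓝 0)) →
      ∀ x, ∀ r ∈ Ioc (0 : ℝ) (1 / 2), ∀ w ∈ S, dist x w ≤ r →
      ∀ P : MvPolynomial σ ℝ, P.totalDegree ≤ m →
      ‖MvPolynomial.eval x P‖ₑ ^ p ≤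
        K * ((⨍⁻ y in closedBall x (4 * r), ‖f y - MvPolynomial.eval y P‖ₑ ^ p ∂volume) +
          ENNReal.ofReal r ^ (-d) *
            ∫⁻ y in closedBall x (2 * r), multiscaleError m p η f y r ∂μ) := by
  obtain ⟨K₁, hK₁, hlimit⟩ := exists_enorm_sub_eval_rpow_le_of_dist_le σ m hp hη
  obtain ⟨K₂, hK₂, hremez⟩ := exists_enorm_eval_rpow_le_mul_setLIntegral_closedBall hd ha C m
    (show 0 < p by linarith)
  refine ⟨K₂ * K₁ * (C + 1), by finiteness, fun {S μ} hμ f hf htr x r hr w hw hxw P hP => ?_⟩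
  set A := ⨍⁻ y in closedBall x (4 * r), ‖f y - MvPolynomial.eval y P‖ₑ ^ p ∂volume
  have hwx : closedBall w r ⊆ closedBall x (2 * r) :=
    closedBall_subset_closedBall' (by linarith [dist_comm x w])
  have htrace : ∀ᵐ y ∂μ.restrict (closedBall w r),
      ‖MvPolynomial.eval y P‖ₑ ^ p ≤ K₁ * (A + multiscaleError m p η f y r) := by
    refine (ae_restrict_iff' measurableSet_closedBall).2 (htr.mono fun y hy hyw => ?_)
    simpa using hlimit f hf y 0 hy r hr.1 x (hwx hyw) P hP
  have hintegral : ∫⁻ y in closedBall w r, ‖MvPolynomial.eval y P‖ₑ ^ p ∂μ ≤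
      K₁ * (A * (C * ENNReal.ofReal r ^ d) +
        ∫⁻ y in closedBall x (2 * r), multiscaleError m p η f y r ∂μ) := by
    refine (lintegral_mono_ae htrace).trans ?_
    rw [lintegral_const_mul' _ _ hK₁, lintegral_add_left measurable_const, setLIntegral_const]
    gcongr
    exact hμ.isFrostman w r hr
  calc ‖MvPolynomial.eval x P‖ₑ ^ p
      ≤ K₂ * (ENNReal.ofReal r ^ (-d) *
          (K₁ * (A * (C * ENNReal.ofReal r ^ d) +
            ∫⁻ y in closedBall x (2 * r), multiscaleError m p η f y r ∂μ))) := by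
        refine (hremez hμ w hw r hr P hP x hxw).trans ?_
        gcongr
    _ = K₂ * K₁ * (C * (ENNReal.ofReal r ^ (-d) * ENNReal.ofReal r ^ d) * A +
          ENNReal.ofReal r ^ (-d) *
            ∫⁻ y in closedBall x (2 * r), multiscaleError m p η f y r ∂μ) := by ring
    _ ≤ K₂ * K₁ * (C + 1) * (A + ENNReal.ofReal r ^ (-d) *
            ∫⁻ y in closedBall x (2 * r), multiscaleError m p η f y r ∂μ) := by
        rw [ofReal_rpow_neg_mul_rpow hr.1, mul_one, mul_assoc _ (C + 1 : ℝ≥0∞),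
          mul_add (C + 1 : ℝ≥0∞)]
        gcongr _ * (?_ * _ + ?_)
        · exact le_self_add
        · exact le_mul_of_one_le_left' le_add_self

theorem exists_enorm_rpow_le_of_trace_eq_zero [Nonempty σ] (hd : Fintype.card σ - 1 < d)
    {a : ℝ≥0} (ha : 0 < a) (C : ℝ≥0) (m : ℕ) (hp : 1 ≤ p) (hη : 0 < η) :
    ∃ K : ℝ≥0∞, K ≠ ⊤ ∧ ∀ {S : Set (σ → ℝ)} {μ : Measure (σ → ℝ)}, IsAhlforsRegular S d a C μ →
      ∀ f : (σ → ℝ) → ℝ, LocallyIntegrable f →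
      (∀ᵐ w ∂μ, Tendsto (fun r => ⨍ y in closedBall w r, f y) (𝓝[>] 0) (𝓝 0)) →
      ∀ x, Tendsto (fun r => ⨍ y in closedBall x r, f y) (𝓝[>] 0) (𝓝 (f x)) →
      ∀ r ∈ Ioc (0 : ℝ) (1 / 2), ∀ w ∈ S, dist x w ≤ r →
      ‖f x‖ₑ ^ p ≤ K * (multiscaleError m p η f x (4 * r) +
        ENNReal.ofReal r ^ (-d) *
          ∫⁻ y in closedBall x (2 * r), multiscaleError m p η f y r ∂μ) := by
  obtain ⟨K₁, hK₁, hlimit⟩ := exists_enorm_sub_eval_rpow_le_of_dist_le σ m hp hη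
  obtain ⟨K₂, hK₂, hpoly⟩ := exists_enorm_eval_rpow_le_of_trace_eq_zero hd ha C m hp hη
  have : 0 ≤ p - 1 := by linarith
  refine ⟨2 ^ (p - 1) * (K₁ + K₂) * 2, by finiteness,
    fun {S μ} hμ f hf htr x hx r hr w hw hxw => ?_⟩
  set T := ENNReal.ofReal r ^ (-d) * ∫⁻ y in closedBall x (2 * r), multiscaleError m p η f y r ∂μ
  set M := multiscaleError m p η f x (4 * r)
  have hM : multiscaleError m p η f x r ≤ M := by
    have h := multiscaleError_half_pow_mul_le (m := m) (p := p) (f := f) (y := x) (r := 4 * r)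
      hη.le 2
    rwa [show (1 / 2 : ℝ) ^ 2 * (4 * r) = r by ring] at h
  have hinf : ‖f x‖ₑ ^ p ≤
      2 ^ (p - 1) * (K₁ + K₂) * (localError m p f x (4 * r) + (M + T)) := by
    refine le_mul_localError_add (by finiteness) fun P hP => ?_
    refine (enorm_sub_rpow_le hp (f x) (MvPolynomial.eval x P) 0 |>.trans_eq' (by simp)).trans ?_
    rw [mul_assoc, add_mul]
    gcongr
    · refine (hlimit f hf x _ hx r hr.1 x (by simp [hr.1.le]) P hP).trans ?_
      gcongr
      exact hM.trans le_self_add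
    · rw [enorm_sub_rev, sub_zero]
      refine (hpoly hμ f hf htr x r hr w hw hxw P hP).trans ?_
      gcongr
      exact le_add_self
  refine hinf.trans ?_
  rw [mul_assoc _ (2 : ℝ≥0∞), two_mul]
  gcongr
  exact localError_le_multiscaleError.trans le_self_add

end PointwiseEstimate

section DistanceLayers

variable {X : Type*} [PseudoMetricSpace X] {S : Set X}

/-- The points whose distance to `S` lies in the dyadic range from `(1 / 2) ^ (k + M)` to
`(1 / 2) ^ k`. -/
def distLayer (S : Set X) (M k : ℕ) : Set X :=
  {x | infDist x S ∈ Ioc ((1 / 2) ^ (k + M)) ((1 / 2) ^ k)}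

lemma infDist_pos_of_mem_distLayer {M k : ℕ} {x : X} (hx : x ∈ distLayer S M k) :
    0 < infDist x S :=
  lt_trans (by positivity) hx.1

lemma distLayer_zero (S : Set X) (k : ℕ) : distLayer S 0 k = ∅ := by
  simp [distLayer]

lemma distLayer_succ_subset (S : Set X) (M k : ℕ) :
    distLayer S (M + 1) k ⊆ distLayer S M k ∪ distLayer S 1 (k + M) := fun x hx =>
  (lt_or_ge ((1 / 2) ^ (k + M)) (infDist x S)).imp (fun h => ⟨h, hx.2⟩) fun h => ⟨hx.1, h⟩

lemma pairwise_disjoint_distLayer_one (S : Set X) :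
    Pairwise (Function.onFun Disjoint (distLayer S 1)) := by
  have hanti : Antitone fun k : ℕ => ((1 / 2 : ℝ)) ^ k :=
    antitone_nat_of_succ_le fun k => pow_le_pow_of_le_one (by norm_num) (by norm_num) k.le_succ
  intro i j hij
  exact (hanti.pairwise_disjoint_on_Ioc_succ hij).preimage fun x => infDist x S

lemma exists_mem_distLayer_one {x : X} (h0 : 0 < infDist x S) {m : ℕ}
    (hm : infDist x S ≤ (1 / 2) ^ m) : ∃ j, x ∈ distLayer S 1 (j + m) := by
  obtain ⟨k, hk⟩ := exists_nat_pow_near_of_lt_one h0 (hm.trans (pow_le_one₀ (by norm_num)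
    (by norm_num))) (show (0 : ℝ) < 1 / 2 by norm_num) (by norm_num)
  have hmk : m < k + 1 := (pow_lt_pow_iff_right_of_lt_one₀ (by norm_num) (by norm_num)).1
    (hk.1.trans_le hm)
  refine ⟨k - m, ?_⟩
  rw [Nat.sub_add_cancel (Nat.lt_succ_iff.1 hmk)]
  exact hk

lemma ofReal_inv_rpow_le_two_rpow {δ : ℝ} {k : ℕ} (hδ : (1 / 2) ^ k ≤ δ) {t : ℝ} (ht : 0 ≤ t) :
    ENNReal.ofReal (δ ^ t)⁻¹ ≤ 2 ^ (t * k) := by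
  have hk : (0 : ℝ) < (1 / 2) ^ k := by positivity
  have : 0 < δ := hk.trans_le hδ
  calc ENNReal.ofReal (δ ^ t)⁻¹ ≤ ENNReal.ofReal (((1 / 2) ^ k) ^ t)⁻¹ := by gcongr
    _ = 2 ^ (t * k) := by
        rw [← Real.rpow_neg hk.le, ← ENNReal.ofReal_rpow_of_pos hk, ofReal_half_pow_rpow,
          neg_mul, neg_neg]

lemma ofReal_inv_infDist_rpow_le (S : Set X) (x : X) {t : ℝ} (ht : 0 < t) (m : ℕ) :
    ENNReal.ofReal (infDist x S ^ t)⁻¹ ≤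
      2 ^ (t * m) +
        ∑' j : ℕ, (distLayer S 1 (j + m)).indicator (fun _ => 2 ^ (t * (j + m + 1))) x := by
  rcases (infDist_nonneg (x := x) (s := S)).eq_or_lt with h0 | h0
  · simp [← h0, Real.zero_rpow ht.ne']
  rcases lt_or_ge ((1 / 2) ^ m) (infDist x S) with hm | hm
  · exact (ofReal_inv_rpow_le_two_rpow hm.le ht.le).trans le_self_add
  · obtain ⟨j, hj⟩ := exists_mem_distLayer_one h0 hm
    calc ENNReal.ofReal (infDist x S ^ t)⁻¹ ≤ 2 ^ (t * (j + m + 1)) := by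
          exact_mod_cast ofReal_inv_rpow_le_two_rpow hj.1.le ht.le
      _ = (distLayer S 1 (j + m)).indicator (fun _ => 2 ^ (t * (j + m + 1))) x :=
          (indicator_of_mem hj fun _ => (2 : ℝ≥0∞) ^ (t * (j + m + 1))).symm
      _ ≤ _ := (ENNReal.le_tsum (f := fun j : ℕ =>
          (distLayer S 1 (j + m)).indicator (fun _ => (2 : ℝ≥0∞) ^ (t * (j + m + 1))) x) j).trans
          le_add_self

variable [MeasurableSpace X]

lemma setLIntegral_distLayer_le (ν : Measure X) (S : Set X) (g : X → ℝ≥0∞) (M k : ℕ) :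
    ∫⁻ x in distLayer S M k, g x ∂ν ≤
      ∑ l ∈ Finset.range M, ∫⁻ x in distLayer S 1 (k + l), g x ∂ν := by
  induction M with
  | zero => simp [distLayer_zero]
  | succ M ih =>
    calc ∫⁻ x in distLayer S (M + 1) k, g x ∂ν
        ≤ (∫⁻ x in distLayer S M k, g x ∂ν) + ∫⁻ x in distLayer S 1 (k + M), g x ∂ν :=
          (lintegral_mono_set (distLayer_succ_subset S M k)).trans (lintegral_union_le _ _ _)
      _ ≤ ∑ l ∈ Finset.range (M + 1), ∫⁻ x in distLayer S 1 (k + l), g x ∂ν := by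
          rw [Finset.sum_range_succ]
          gcongr

variable [OpensMeasurableSpace X]

lemma measurableSet_distLayer (S : Set X) (M k : ℕ) : MeasurableSet (distLayer S M k) :=
  (measurable_infDist (s := S)) measurableSet_Ioc

lemma tsum_setLIntegral_distLayer_one_le (ν : Measure X) (S : Set X) (g : X → ℝ≥0∞) (c : ℕ) :
    ∑' k, ∫⁻ x in distLayer S 1 (k + c), g x ∂ν ≤ ∫⁻ x, g x ∂ν := by
  calc ∑' k, ∫⁻ x in distLayer S 1 (k + c), g x ∂ν ≤ ∑' k, ∫⁻ x in distLayer S 1 k, g x ∂ν :=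
        ENNReal.tsum_comp_le_tsum_of_injective (add_left_injective c)
          fun k => ∫⁻ x in distLayer S 1 k, g x ∂ν
    _ = ∫⁻ x in ⋃ k, distLayer S 1 k, g x ∂ν :=
        (lintegral_iUnion (fun k => measurableSet_distLayer S 1 k)
          (pairwise_disjoint_distLayer_one S) _).symm
    _ ≤ ∫⁻ x, g x ∂ν := setLIntegral_le_lintegral _ _

lemma tsum_setLIntegral_distLayer_le (ν : Measure X) (S : Set X) (g : X → ℝ≥0∞) (M c : ℕ) :
    ∑' k, ∫⁻ x in distLayer S M (k + c), g x ∂ν ≤ M * ∫⁻ x, g x ∂ν := by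
  calc ∑' k, ∫⁻ x in distLayer S M (k + c), g x ∂ν
      ≤ ∑' k, ∑ l ∈ Finset.range M, ∫⁻ x in distLayer S 1 (k + c + l), g x ∂ν :=
        ENNReal.tsum_le_tsum fun k => setLIntegral_distLayer_le ν S g M (k + c)
    _ = ∑ l ∈ Finset.range M, ∑' k, ∫⁻ x in distLayer S 1 (k + (c + l)), g x ∂ν := by
        simp only [← add_assoc]
        exact Summable.tsum_finsetSum fun _ _ => ENNReal.summable
    _ ≤ ∑ _l ∈ Finset.range M, ∫⁻ x, g x ∂ν :=
        Finset.sum_le_sum fun l _ => tsum_setLIntegral_distLayer_one_le ν S g (c + l)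
    _ = M * ∫⁻ x, g x ∂ν := by simp

end DistanceLayers

section LayerEstimates

variable {σ : Type*} [Fintype σ] {S : Set (σ → ℝ)} {M : ℕ} {d t p η : ℝ} {a C : ℝ≥0}
  {μ : Measure (σ → ℝ)} {f : (σ → ℝ) → ℝ}

lemma localError_succ_le_mul_dyadicSharp (m : ℕ) (p t : ℝ) (f : (σ → ℝ) → ℝ) {x y : σ → ℝ} {k : ℕ}
    (hxy : dist x y ≤ (1 / 2) ^ (k + 1)) :
    localError m p f x ((1 / 2) ^ (k + 1)) ≤
      2 ^ (Fintype.card σ - t * k) * dyadicSharp m t p f y := by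
  have hk : (1 / 2 : ℝ) ^ k = 2 * (1 / 2) ^ (k + 1) := by ring
  calc localError m p f x ((1 / 2) ^ (k + 1))
      ≤ ENNReal.ofReal 2 ^ Fintype.card σ * localError m p f y (2 * (1 / 2) ^ (k + 1)) :=
        localError_le_mul_localError (by positivity) two_pos
          (closedBall_subset_closedBall' (by linarith))
    _ ≤ ENNReal.ofReal 2 ^ Fintype.card σ * (2 ^ (-(t * k)) * dyadicSharp m t p f y) := by
        rw [← hk]
        gcongr
        exact localError_le_mul_dyadicSharp t k
    _ = 2 ^ (Fintype.card σ - t * k) * dyadicSharp m t p f y := by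
        rw [← mul_assoc, ENNReal.ofReal_ofNat, ← ENNReal.rpow_natCast, ← two_rpow_add,
          ← sub_eq_add_neg]

lemma IsPorous.ofReal_pow_mul_localError_le (hS : IsPorous S M) (m : ℕ) (p t : ℝ)
    (f : (σ → ℝ) → ℝ) {w : σ → ℝ} (hw : w ∈ S) {k : ℕ} (hk : 1 ≤ k) :
    ENNReal.ofReal ((1 / 2) ^ (k + 1)) ^ Fintype.card σ * localError m p f w ((1 / 2) ^ (k + 1)) ≤
      2 ^ (Fintype.card σ - t * k) * ∫⁻ y in closedBall w ((1 / 2) ^ (k + 1)),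
        (distLayer S M (k + 1)).indicator (dyadicSharp m t p f) y := by
  set r : ℝ := (1 / 2) ^ (k + 1)
  set V := closedBall w r ∩ {y | (1 / 2) ^ M * r < infDist y S}
  have hr : r ∈ Ioc 0 (1 / 4) := ⟨by positivity, (pow_le_pow_of_le_one (by norm_num)
    (by norm_num) (Nat.succ_le_succ hk)).trans_eq (by norm_num)⟩
  have hVm : MeasurableSet V := measurableSet_closedBall.inter
    (measurableSet_lt measurable_const (by fun_prop))
  have hVlayer : V ⊆ distLayer S M (k + 1) ∩ closedBall w r := fun y hy =>
    ⟨⟨(pow_add _ _ _).trans (mul_comm _ _) |>.trans_lt hy.2,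
      (infDist_le_dist_of_mem hw).trans hy.1⟩, hy.1⟩
  calc ENNReal.ofReal r ^ Fintype.card σ * localError m p f w r
      ≤ volume V * localError m p f w r := by gcongr; exact hS w hw r hr
    _ = ∫⁻ _ in V, localError m p f w r := by rw [setLIntegral_const, mul_comm]
    _ ≤ ∫⁻ y in V, 2 ^ (Fintype.card σ - t * k) * dyadicSharp m t p f y :=
        setLIntegral_mono' hVm fun y hy =>
          localError_succ_le_mul_dyadicSharp m p t f (dist_comm y w ▸ hy.1)
    _ = 2 ^ (Fintype.card σ - t * k) * ∫⁻ y in V, dyadicSharp m t p f y :=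
        lintegral_const_mul' _ _ (two_rpow_ne_top _)
    _ ≤ _ := by
        rw [setLIntegral_indicator (measurableSet_distLayer S M (k + 1))]
        gcongr

lemma IsPorous.localError_le (hS : IsPorous S M) (m : ℕ) (p t : ℝ) (f : (σ → ℝ) → ℝ)
    {w : σ → ℝ} (hw : w ∈ S) {k : ℕ} (hk : 2 ≤ k) :
    localError m p f w ((1 / 2) ^ k) ≤ 2 ^ (Fintype.card σ + t) * 2 ^ ((Fintype.card σ - t) * k) *
      ∫⁻ y in closedBall w ((1 / 2) ^ k), (distLayer S M k).indicator (dyadicSharp m t p f) y := by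
  obtain ⟨k, rfl⟩ := Nat.exists_eq_add_of_le' (one_le_two.trans hk)
  set n := Fintype.card σ
  set r : ℝ := (1 / 2) ^ (k + 1)
  have hrn : 2 ^ (n * ((k + 1 : ℕ) : ℝ)) * ENNReal.ofReal r ^ n = 1 := by
    rw [← ENNReal.rpow_natCast, ofReal_half_pow_rpow, ← two_rpow_add, add_neg_cancel,
      ENNReal.rpow_zero]
  calc localError m p f w r
      = 2 ^ (n * ((k + 1 : ℕ) : ℝ)) * (ENNReal.ofReal r ^ n * localError m p f w r) := by
        rw [← mul_assoc, hrn, one_mul]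
    _ ≤ 2 ^ (n * ((k + 1 : ℕ) : ℝ)) * (2 ^ (n - t * k) * ∫⁻ y in closedBall w r,
          (distLayer S M (k + 1)).indicator (dyadicSharp m t p f) y) := by
        grw [hS.ofReal_pow_mul_localError_le m p t f hw (Nat.le_of_succ_le_succ hk)]
    _ = _ := by
        rw [← mul_assoc, ← two_rpow_add, ← two_rpow_add]
        push_cast
        ring_nf

lemma lintegral_localError_le [SFinite μ] (hμ : IsAhlforsRegular S d a C μ) (hS : IsPorous S M)
    (hp : 0 < p) (hf : MemLp f (ENNReal.ofReal p)) (m : ℕ) (t : ℝ) {k : ℕ} (hk : 2 ≤ k) :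
    ∫⁻ w, localError m p f w ((1 / 2) ^ k) ∂μ ≤
      2 ^ (Fintype.card σ + t) * C * 2 ^ ((Fintype.card σ - t - d) * k) *
        ∫⁻ y in distLayer S M k, dyadicSharp m t p f y := by
  set n := Fintype.card σ
  set r : ℝ := (1 / 2) ^ k
  set g := (distLayer S M k).indicator (dyadicSharp m t p f)
  have hr : r ∈ Ioc 0 (1 / 2) := ⟨by positivity, (pow_le_pow_of_le_one (by norm_num)
    (by norm_num) (one_le_two.trans hk)).trans_eq (pow_one _)⟩
  have hg : Measurable g :=
    (measurable_dyadicSharp hp hf m t).indicator (measurableSet_distLayer S M k)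
  calc ∫⁻ w, localError m p f w r ∂μ
      ≤ ∫⁻ w, (2 ^ (n + t) * 2 ^ ((n - t) * k) * ∫⁻ y in closedBall w r, g y) ∂μ :=
        lintegral_mono_ae (hμ.ae_mem.mono fun w hw => hS.localError_le m p t f hw hk)
    _ = 2 ^ (n + t) * 2 ^ ((n - t) * k) * ∫⁻ w in univ, (∫⁻ y in closedBall w r, g y) ∂μ := by
        rw [lintegral_const_mul' _ _ (ENNReal.mul_ne_top (two_rpow_ne_top _) (two_rpow_ne_top _)),
          Measure.restrict_univ]
    _ = 2 ^ (n + t) * 2 ^ ((n - t) * k) * ∫⁻ y, g y * μ (closedBall y r) := by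
        rw [setLIntegral_setLIntegral_closedBall volume μ univ hg]
        simp only [inter_univ]
    _ ≤ 2 ^ (n + t) * 2 ^ ((n - t) * k) * ∫⁻ y, g y * (C * ENNReal.ofReal r ^ d) := by
        gcongr with y
        exact hμ.isFrostman y r hr
    _ = 2 ^ (n + t) * C * (2 ^ ((n - t) * k) * 2 ^ (-(d * k))) *
          ∫⁻ y in distLayer S M k, dyadicSharp m t p f y := by
        rw [lintegral_mul_const _ hg, lintegral_indicator (measurableSet_distLayer S M k),
          ofReal_half_pow_rpow]
        ring
    _ = _ := by
        rw [← two_rpow_add]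
        ring_nf

lemma measurable_multiscaleError (hp : 0 < p) (hf : MemLp f (ENNReal.ofReal p)) (m : ℕ) (η : ℝ)
    {r : ℝ} (hr : 0 < r) : Measurable fun x => multiscaleError m p η f x r :=
  .tsum fun _ => (measurable_localError hp hf m (by positivity)).const_mul _

lemma lintegral_multiscaleError_le [SFinite μ] (hμ : IsAhlforsRegular S d a C μ)
    (hS : IsPorous S M) (hp : 0 < p) (hf : MemLp f (ENNReal.ofReal p)) (m : ℕ)
    (hη : 2 * η = t + d - Fintype.card σ) {j : ℕ} (hj : 2 ≤ j) :
    ∫⁻ w, multiscaleError m p η f w ((1 / 2) ^ j) ∂μ ≤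
      2 ^ (Fintype.card σ + t) * C * 2 ^ ((Fintype.card σ - t - d) * j) *
        ∑' i : ℕ, 2 ^ (-(η * i)) * ∫⁻ y in distLayer S M (j + i), dyadicSharp m t p f y := by
  simp only [multiscaleError, ← pow_add]
  rw [lintegral_tsum fun i =>
    ((measurable_localError hp hf m (by positivity)).const_mul _).aemeasurable,
    ← ENNReal.tsum_mul_left]
  refine ENNReal.tsum_le_tsum fun i => ?_
  set n := Fintype.card σ
  have hexp : (n - t - d) * ((j + i : ℕ) : ℝ) + η * i = (n - t - d) * j + -(η * i) := by
    push_cast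
    linear_combination (i : ℝ) * hη
  rw [lintegral_const_mul' _ _ (two_rpow_ne_top _), add_comm i j]
  calc 2 ^ (η * i) * ∫⁻ w, localError m p f w ((1 / 2) ^ (j + i)) ∂μ
      ≤ 2 ^ (η * i) * (2 ^ (n + t) * C * 2 ^ ((n - t - d) * ((j + i : ℕ) : ℝ)) *
          ∫⁻ y in distLayer S M (j + i), dyadicSharp m t p f y) := by
        gcongr
        exact lintegral_localError_le hμ hS hp hf m t (hj.trans (Nat.le_add_right j i))
    _ = 2 ^ (n + t) * C * (2 ^ ((n - t - d) * ((j + i : ℕ) : ℝ)) * 2 ^ (η * i)) *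
          ∫⁻ y in distLayer S M (j + i), dyadicSharp m t p f y := by ring
    _ = _ := by
        rw [← two_rpow_add, hexp, two_rpow_add ((n - t - d) * j)]
        ring

lemma multiscaleError_le_mul_dyadicSharp (m : ℕ) (p η t : ℝ) (f : (σ → ℝ) → ℝ) (x : σ → ℝ)
    (j : ℕ) :
    multiscaleError m p η f x ((1 / 2) ^ j) ≤
      (∑' i : ℕ, 2 ^ (-((t - η) * i))) * (2 ^ (-(t * j)) * dyadicSharp m t p f x) := by
  rw [multiscaleError, ← ENNReal.tsum_mul_right]
  refine ENNReal.tsum_le_tsum fun i => ?_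
  calc 2 ^ (η * i) * localError m p f x ((1 / 2) ^ i * (1 / 2) ^ j)
      ≤ 2 ^ (η * i) * (2 ^ (-(t * ((i + j : ℕ) : ℝ))) * dyadicSharp m t p f x) := by
        rw [← pow_add]
        gcongr
        exact localError_le_mul_dyadicSharp t (i + j)
    _ = 2 ^ (-((t - η) * i)) * (2 ^ (-(t * j)) * dyadicSharp m t p f x) := by
        rw [← mul_assoc, ← mul_assoc, ← two_rpow_add, ← two_rpow_add]
        push_cast
        ring_nf

end LayerEstimates

section WeightedEstimates

variable {σ : Type*} [Fintype σ] {S : Set (σ → ℝ)} {M m : ℕ} {d t p η : ℝ} {a C : ℝ≥0}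
  {μ : Measure (σ → ℝ)} {f : (σ → ℝ) → ℝ}

lemma volume_closedBall_two_mul_half_pow (w : σ → ℝ) (j : ℕ) :
    volume (closedBall w (2 * (1 / 2) ^ j)) =
      4 ^ Fintype.card σ * 2 ^ (-((Fintype.card σ : ℝ) * j)) := by
  rw [Real.volume_pi_closedBall _ (by positivity),
    show 2 * (2 * (1 / 2) ^ j) = 4 * (1 / 2 : ℝ) ^ j by ring, ENNReal.ofReal_pow (by positivity),
    ENNReal.ofReal_mul zero_le_four, mul_pow, ENNReal.ofReal_ofNat,
    ← ENNReal.rpow_natCast (ENNReal.ofReal _), ofReal_half_pow_rpow]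

lemma setLIntegral_ofReal_rpow_mul_multiscaleError_le [SFinite μ] (hμ : IsAhlforsRegular S d a C μ)
    (hS : IsPorous S M) (hp : 0 < p) (hf : MemLp f (ENNReal.ofReal p)) (m : ℕ)
    (hη : 2 * η = t + d - Fintype.card σ) (A : Set (σ → ℝ)) {j : ℕ} (hj : 2 ≤ j) :
    ∫⁻ x in A, ENNReal.ofReal ((1 / 2) ^ j) ^ (-d) *
      (∫⁻ w in closedBall x (2 * (1 / 2) ^ j), multiscaleError m p η f w ((1 / 2) ^ j) ∂μ) ≤
      4 ^ Fintype.card σ * 2 ^ (Fintype.card σ + t) * C * (2 ^ (-(t * j)) *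
        ∑' i : ℕ, 2 ^ (-(η * i)) * ∫⁻ y in distLayer S M (j + i), dyadicSharp m t p f y) := by
  set n := Fintype.card σ
  set r : ℝ := (1 / 2) ^ j
  have hr : 0 < r := by positivity
  have hvol : ∀ w : σ → ℝ, volume (closedBall w (2 * r) ∩ A) ≤ 4 ^ n * 2 ^ (-(n * (j : ℝ))) :=
    fun w => (measure_mono inter_subset_left).trans_eq (volume_closedBall_two_mul_half_pow w j)
  rw [lintegral_const_mul' _ _ (ofReal_half_pow_rpow j (-d) ▸ two_rpow_ne_top _),
    setLIntegral_setLIntegral_closedBall μ volume A (measurable_multiscaleError hp hf m η hr)]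
  set T := ∑' i : ℕ, 2 ^ (-(η * i)) * ∫⁻ y in distLayer S M (j + i), dyadicSharp m t p f y
  calc ENNReal.ofReal r ^ (-d) *
        ∫⁻ w, multiscaleError m p η f w r * volume (closedBall w (2 * r) ∩ A) ∂μ
      ≤ ENNReal.ofReal r ^ (-d) *
          ∫⁻ w, multiscaleError m p η f w r * (4 ^ n * 2 ^ (-(n * (j : ℝ)))) ∂μ := by
        gcongr with w
        exact hvol w
    _ = 2 ^ (d * j) * (4 ^ n * 2 ^ (-(n * (j : ℝ)))) * ∫⁻ w, multiscaleError m p η f w r ∂μ := by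
        rw [lintegral_mul_const _ (measurable_multiscaleError hp hf m η hr), ofReal_half_pow_rpow,
          neg_mul, neg_neg]
        ring
    _ ≤ 2 ^ (d * j) * (4 ^ n * 2 ^ (-(n * (j : ℝ)))) *
          (2 ^ (n + t) * C * 2 ^ ((n - t - d) * j) * T) := by
        grw [lintegral_multiscaleError_le hμ hS hp hf m hη hj]
    _ = 4 ^ n * 2 ^ (n + t) * C *
          (2 ^ (d * j) * 2 ^ (-(n * (j : ℝ))) * 2 ^ ((n - t - d) * j) * T) := by ring
    _ = _ := by
        rw [← two_rpow_add, ← two_rpow_add]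
        ring_nf

lemma ae_tendsto_setAverage_closedBall (hf : LocallyIntegrable f) :
    ∀ᵐ x, Tendsto (fun r => ⨍ y in closedBall x r, f y) (𝓝[>] 0) (𝓝 (f x)) := by
  filter_upwards [IsUnifLocDoublingMeasure.ae_tendsto_average volume hf 1] with x hx
  refine hx (l := 𝓝[>] (0 : ℝ)) (fun _ => x) (fun r => r) tendsto_id ?_
  filter_upwards [self_mem_nhdsWithin] with r hr
  exact mem_closedBall_self (by simpa using le_of_lt hr)

lemma exists_ae_enorm_rpow_le_of_mem_distLayer [Nonempty σ] (hμ : IsAhlforsRegular S d a C μ)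
    (hS : IsClosed S) (hd : Fintype.card σ - 1 < d) (hp : 1 ≤ p) (hη : 0 < η) (hηt : η < t)
    (m : ℕ) :
    ∃ K : ℝ≥0∞, K ≠ ⊤ ∧ ∀ f : (σ → ℝ) → ℝ, LocallyIntegrable f →
      (∀ᵐ w ∂μ, Tendsto (fun r => ⨍ y in closedBall w r, f y) (𝓝[>] 0) (𝓝 0)) →
      ∀ j : ℕ, ∀ᵐ x, x ∈ distLayer S 1 (j + 2) →
      ‖f x‖ₑ ^ p ≤ K * (2 ^ (-(t * j)) * dyadicSharp m t p f x +
        ENNReal.ofReal ((1 / 2) ^ (j + 2)) ^ (-d) * ∫⁻ w in closedBall x (2 * (1 / 2) ^ (j + 2)),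
          multiscaleError m p η f w ((1 / 2) ^ (j + 2)) ∂μ) := by
  obtain ⟨K, hK, hpoint⟩ := exists_enorm_rpow_le_of_trace_eq_zero hd hμ.pos C m hp hη
  set T := ∑' i : ℕ, (2 : ℝ≥0∞) ^ (-((t - η) * i))
  have hT : T ≠ ⊤ := tsum_two_rpow_neg_ne_top (sub_pos.2 hηt)
  refine ⟨K * (T + 1), by finiteness, fun f hf htr j => ?_⟩
  filter_upwards [ae_tendsto_setAverage_closedBall hf] with x hx hxL
  set r : ℝ := (1 / 2) ^ (j + 2)
  have hr : r ∈ Ioc 0 (1 / 2) := ⟨by positivity, (pow_le_pow_of_le_one (by norm_num)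
    (by norm_num) (show 1 ≤ j + 2 by omega)).trans_eq (pow_one _)⟩
  have h4r : 4 * r = (1 / 2) ^ j := by simp only [r]; ring
  have hne : S.Nonempty := nonempty_iff_ne_empty.2 fun h => by
    simpa [h] using infDist_pos_of_mem_distLayer hxL
  obtain ⟨w, hw, hxw⟩ := hS.exists_infDist_eq_dist hne x
  grw [hpoint hμ f hf htr x hx r hr w hw (hxw ▸ hxL.2), h4r,
    multiscaleError_le_mul_dyadicSharp m p η t f x j, mul_assoc K, mul_add (T + 1)]
  gcongr _ * (?_ + ?_)
  · exact mul_le_mul_left le_self_add _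
  · exact le_mul_of_one_le_left' le_add_self

lemma exists_setLIntegral_distLayer_le [Nonempty σ] [SFinite μ] (hμ : IsAhlforsRegular S d a C μ)
    (hS : IsClosed S) (hSM : IsPorous S M) (hd : Fintype.card σ - 1 < d) (hp : 1 ≤ p)
    (hη : 2 * η = t + d - Fintype.card σ) (hη0 : 0 < η) (hηt : η < t) (m : ℕ) :
    ∃ K : ℝ≥0∞, K ≠ ⊤ ∧ ∀ f : (σ → ℝ) → ℝ, MemLp f (ENNReal.ofReal p) →
      (∀ᵐ w ∂μ, Tendsto (fun r => ⨍ y in closedBall w r, f y) (𝓝[>] 0) (𝓝 0)) → ∀ j : ℕ,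
      ∫⁻ x in distLayer S 1 (j + 2), ‖f x‖ₑ ^ p ≤
        K * (2 ^ (-(t * j)) * ((∫⁻ x in distLayer S 1 (j + 2), dyadicSharp m t p f x) +
          ∑' i : ℕ, 2 ^ (-(η * i)) *
            ∫⁻ x in distLayer S M (j + 2 + i), dyadicSharp m t p f x)) := by
  have hp0 : 0 < p := by linarith
  obtain ⟨K, hK, hpoint⟩ := exists_ae_enorm_rpow_le_of_mem_distLayer hμ hS hd hp hη0 hηt m
  set n := Fintype.card σ
  set B : ℝ≥0∞ := 4 ^ n * 2 ^ (n + t) * C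
  have hB : B ≠ ⊤ := ENNReal.mul_ne_top (ENNReal.mul_ne_top (by finiteness) (two_rpow_ne_top _))
    ENNReal.coe_ne_top
  refine ⟨K * (1 + B), by finiteness, fun f hf htr j => ?_⟩
  set G := dyadicSharp m t p f
  set L := distLayer S 1 (j + 2)
  set r : ℝ := (1 / 2) ^ (j + 2)
  set J : (σ → ℝ) → ℝ≥0∞ := fun x =>
    ENNReal.ofReal r ^ (-d) * ∫⁻ w in closedBall x (2 * r), multiscaleError m p η f w r ∂μ
  set Z := ∑' i : ℕ, 2 ^ (-(η * i)) * ∫⁻ x in distLayer S M (j + 2 + i), G x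
  have hJ : ∫⁻ x in L, J x ≤ B * (2 ^ (-(t * j)) * Z) := by
    grw [setLIntegral_ofReal_rpow_mul_multiscaleError_le hμ hSM hp0 hf m hη L
      (Nat.le_add_left 2 j)]
    gcongr
    · exact one_le_two
    · nlinarith
    · omega
  calc ∫⁻ x in L, ‖f x‖ₑ ^ p
      ≤ ∫⁻ x in L, K * (2 ^ (-(t * j)) * G x + J x) :=
        setLIntegral_mono_ae' (measurableSet_distLayer S 1 _)
          (hpoint f (hf.locallyIntegrable (by simpa using hp)) htr j)
    _ = K * (2 ^ (-(t * j)) * (∫⁻ x in L, G x) + ∫⁻ x in L, J x) := by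
        rw [lintegral_const_mul' _ _ hK,
          lintegral_add_left ((measurable_dyadicSharp hp0 hf m t).const_mul _),
          lintegral_const_mul' _ _ (two_rpow_ne_top _)]
    _ ≤ K * (1 + B) * (2 ^ (-(t * j)) * ((∫⁻ x in L, G x) + Z)) := by
        rw [mul_assoc K, mul_add (2 ^ _), mul_add (1 + B)]
        gcongr _ * (?_ + ?_)
        · exact le_mul_of_one_le_left' le_self_add
        · exact hJ.trans (by gcongr; exact le_add_self)

lemma tsum_tsum_two_rpow_mul_setLIntegral_distLayer_le (S : Set (σ → ℝ)) (M : ℕ) (η : ℝ)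
    (g : (σ → ℝ) → ℝ≥0∞) :
    ∑' j : ℕ, ∑' i : ℕ, 2 ^ (-(η * i)) * ∫⁻ x in distLayer S M (j + 2 + i), g x ≤
      (∑' i : ℕ, 2 ^ (-(η * i))) * (M * ∫⁻ x, g x) := by
  rw [ENNReal.tsum_comm, ← ENNReal.tsum_mul_right]
  simp only [ENNReal.tsum_mul_left, add_assoc]
  gcongr with i
  exact tsum_setLIntegral_distLayer_le volume S g M (2 + i)

lemma lintegral_mul_ofReal_inv_infDist_rpow_le (S : Set (σ → ℝ)) (ht : 0 < t)
    {g : (σ → ℝ) → ℝ≥0∞} (hg : AEMeasurable g) (m : ℕ) :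
    ∫⁻ x, g x * ENNReal.ofReal (infDist x S ^ t)⁻¹ ≤ 2 ^ (t * m) * (∫⁻ x, g x) +
      ∑' j : ℕ, 2 ^ (t * (j + m + 1)) * ∫⁻ x in distLayer S 1 (j + m), g x := by
  have hind : ∀ j : ℕ, AEMeasurable fun x => (distLayer S 1 (j + m)).indicator
      (fun x => 2 ^ (t * (j + m + 1)) * g x) x := fun j =>
    (hg.const_mul _).indicator (measurableSet_distLayer S 1 _)
  calc ∫⁻ x, g x * ENNReal.ofReal (infDist x S ^ t)⁻¹
      ≤ ∫⁻ x, (2 ^ (t * m) * g x + ∑' j : ℕ, (distLayer S 1 (j + m)).indicator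
          (fun x => 2 ^ (t * (j + m + 1)) * g x) x) := lintegral_mono fun x => by
        simp only [indicator_mul_left]
        rw [ENNReal.tsum_mul_right, ← add_mul, mul_comm]
        grw [ofReal_inv_infDist_rpow_le S x ht m]
    _ = _ := by
        rw [lintegral_add_left' (hg.const_mul _), lintegral_const_mul' _ _ (two_rpow_ne_top _),
          lintegral_tsum hind]
        simp only [lintegral_indicator (measurableSet_distLayer S 1 _),
          lintegral_const_mul' _ _ (two_rpow_ne_top _)]

lemma tsum_two_rpow_mul_setLIntegral_distLayer_le {g G : (σ → ℝ) → ℝ≥0∞} {K : ℝ≥0∞}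
    (h : ∀ j : ℕ, ∫⁻ x in distLayer S 1 (j + 2), g x ≤
      K * (2 ^ (-(t * j)) * ((∫⁻ x in distLayer S 1 (j + 2), G x) +
        ∑' i : ℕ, 2 ^ (-(η * i)) * ∫⁻ x in distLayer S M (j + 2 + i), G x))) :
    ∑' j : ℕ, 2 ^ (t * (j + 2 + 1)) * ∫⁻ x in distLayer S 1 (j + 2), g x ≤
      2 ^ (t * 3) * K * (1 + (∑' i : ℕ, 2 ^ (-(η * i))) * M) * ∫⁻ x, G x := by
  set Z : ℕ → ℝ≥0∞ := fun j => ∑' i : ℕ, 2 ^ (-(η * i)) * ∫⁻ x in distLayer S M (j + 2 + i), G x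
  have hweight : ∀ j : ℕ, 2 ^ (t * (j + 2 + 1)) * ∫⁻ x in distLayer S 1 (j + 2), g x ≤
      2 ^ (t * 3) * K * ((∫⁻ x in distLayer S 1 (j + 2), G x) + Z j) := fun j => by
    have hexp : t * (j + 2 + 1) + -(t * j) = t * 3 := by ring
    grw [h j]
    rw [← mul_assoc, ← mul_assoc, mul_right_comm _ K, ← two_rpow_add, hexp]
  calc ∑' j : ℕ, 2 ^ (t * (j + 2 + 1)) * ∫⁻ x in distLayer S 1 (j + 2), g x
      ≤ 2 ^ (t * 3) * K * ((∑' j, ∫⁻ x in distLayer S 1 (j + 2), G x) + ∑' j, Z j) := by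
        rw [← ENNReal.tsum_add, ← ENNReal.tsum_mul_left]
        exact ENNReal.tsum_le_tsum hweight
    _ ≤ 2 ^ (t * 3) * K *
          ((∫⁻ x, G x) + (∑' i : ℕ, 2 ^ (-(η * i))) * (M * ∫⁻ x, G x)) := by
        grw [tsum_setLIntegral_distLayer_one_le volume S G 2,
          tsum_tsum_two_rpow_mul_setLIntegral_distLayer_le S M η G]
    _ = _ := by ring

theorem exists_lintegral_enorm_rpow_mul_inv_infDist_rpow_le [Nonempty σ]
    (hμ : IsAhlforsRegular S d a C μ) (hS : IsClosed S) (hd : Fintype.card σ - 1 < d)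
    (hd' : d < Fintype.card σ) (hp : 1 ≤ p) (ht : Fintype.card σ - d < t) (m : ℕ) :
    ∃ K : ℝ≥0∞, K ≠ ⊤ ∧ ∀ f : (σ → ℝ) → ℝ, MemLp f (ENNReal.ofReal p) →
      (∀ᵐ w ∂μ, Tendsto (fun r => ⨍ y in closedBall w r, f y) (𝓝[>] 0) (𝓝 0)) →
      ∫⁻ x, ‖f x‖ₑ ^ p * ENNReal.ofReal (infDist x S ^ t)⁻¹ ≤
        K * ((∫⁻ x, ‖f x‖ₑ ^ p) + ∫⁻ x, dyadicSharp m t p f x) := by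
  have hcard : (1 : ℝ) ≤ Fintype.card σ := by exact_mod_cast Fintype.card_pos
  have : SFinite μ := hμ.isFrostman.sFinite (by linarith)
  obtain ⟨M, hSM⟩ := hμ.exists_isPorous hS hd'
  obtain ⟨η, hη⟩ : ∃ η, 2 * η = t + d - Fintype.card σ := ⟨_, mul_div_cancel₀ _ two_ne_zero⟩
  obtain ⟨K, hK, hlayer⟩ := exists_setLIntegral_distLayer_le hμ hS hSM hd hp hη
    (by linarith) (by linarith) m
  set T := ∑' i : ℕ, (2 : ℝ≥0∞) ^ (-(η * i))
  have hT : T ≠ ⊤ := tsum_two_rpow_neg_ne_top (by linarith)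
  refine ⟨2 ^ (t * 2) + 2 ^ (t * 3) * K * (1 + T * M), by
    have h := two_rpow_ne_top; finiteness [h (t * 2), h (t * 3)], fun f hf htr => ?_⟩
  calc ∫⁻ x, ‖f x‖ₑ ^ p * ENNReal.ofReal (infDist x S ^ t)⁻¹
      ≤ 2 ^ (t * 2) * (∫⁻ x, ‖f x‖ₑ ^ p) +
          ∑' j : ℕ, 2 ^ (t * (j + 2 + 1)) * ∫⁻ x in distLayer S 1 (j + 2), ‖f x‖ₑ ^ p := by
        exact_mod_cast lintegral_mul_ofReal_inv_infDist_rpow_le S (by linarith)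
          (hf.1.enorm.pow_const p) 2
    _ ≤ 2 ^ (t * 2) * (∫⁻ x, ‖f x‖ₑ ^ p) +
          2 ^ (t * 3) * K * (1 + T * M) * ∫⁻ x, dyadicSharp m t p f x := by
        grw [tsum_two_rpow_mul_setLIntegral_distLayer_le (hlayer f hf htr)]
    _ ≤ _ := by
        rw [mul_add (_ + _)]
        gcongr
        · exact le_self_add
        · exact le_add_self

end WeightedEstimates

section Hardy

variable {n : ℕ} {p : ℝ}

lemma iSup_two_rpow_mul_localApprox_rpow (m : ℕ) (hp : 0 < p) (s : ℝ) (f : Rn n → ℝ) (x : Rn n) :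
    (⨆ j : ℕ, 2 ^ (s * j) * localApprox (m + 1) p f x ((1 / 2) ^ j)) ^ p =
      dyadicSharp m (s * p) p f x := by
  refine ((ENNReal.orderIsoRpow p hp).map_iSup _).trans (iSup_congr fun j => ?_)
  rw [ENNReal.orderIsoRpow_apply, ENNReal.mul_rpow_of_nonneg _ _ hp.le, localApprox_rpow _ hp,
    ← ENNReal.rpow_mul, mul_right_comm, Nat.add_sub_cancel]

lemma iSup_two_rpow_mul_localApprox_le_fSharp (s p : ℝ) (f : Rn n → ℝ) (x : Rn n) :
    ⨆ j : ℕ, 2 ^ (s * j) * localApprox (⌊s⌋₊ + 1) p f x ((1 / 2) ^ j) ≤ fSharp s p f x := by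
  refine iSup_le fun j => ?_
  have hj : (1 / 2 : ℝ) ^ j ∈ Ioc 0 1 :=
    ⟨by positivity, pow_le_one₀ (by norm_num) (by norm_num)⟩
  have hweight : ENNReal.ofReal (((1 / 2) ^ j) ^ (-s)) = 2 ^ (s * j) := by
    rw [← ENNReal.ofReal_rpow_of_pos hj.1, ofReal_half_pow_rpow, neg_mul, neg_neg]
  rw [← hweight]
  exact le_iSup₂ (f := fun r (_ : r ∈ Ioc (0 : ℝ) 1) =>
    ENNReal.ofReal (r ^ (-s)) * localApprox (⌊s⌋₊ + 1) p f x r) _ hj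

lemma hardyLHS_eq (S : Set (Rn n)) (s : ℝ) (hp : 0 ≤ p) (f : Rn n → ℝ) :
    hardyLHS S s p f =
      (∫⁻ x, ‖f x‖ₑ ^ p * ENNReal.ofReal (infDist x S ^ (s * p))⁻¹) ^ (1 / p) := by
  simp only [hardyLHS, div_eq_mul_inv (_ ^ p),
    ENNReal.ofReal_mul (Real.rpow_nonneg (abs_nonneg _) p),
    ← ENNReal.ofReal_rpow_of_nonneg (abs_nonneg _) hp, Real.enorm_eq_ofReal_abs]

lemma memLp_ofReal_of_lintegral_lt_top {f : Rn n → ℝ} (hp : 0 < p) (hf : Measurable f)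
    (hfin : ∫⁻ x, ENNReal.ofReal |f x| ^ p < ⊤) : MemLp f (ENNReal.ofReal p) := by
  refine ⟨hf.aestronglyMeasurable, (eLpNorm_lt_top_iff_lintegral_rpow_enorm_lt_top
    (by simpa using hp) ENNReal.ofReal_ne_top).2 ?_⟩
  simpa only [ENNReal.toReal_ofReal hp.le, Real.enorm_eq_ofReal_abs] using hfin

end Hardy

theorem hardy_sharp_maximal_general {n : ℕ} (hn : 1 ≤ n) (S : Set (Rn n)) (d C₀ : ℝ)
    (hS : IsDSet S d C₀) (hd1 : (n : ℝ) - 1 < d) (hd2 : d < n)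
    (p s : ℝ) (hp : 1 ≤ p) (hs : ((n : ℝ) - d) / p < s) (m : ℕ) :
    ∃ c > 0, ∀ f : Rn n → ℝ, MemLp f (ENNReal.ofReal p) → TraceZero S d f →
      hardyLHS S s p f ≤ ENNReal.ofReal c *
        ((∫⁻ x, ENNReal.ofReal |f x| ^ p) ^ (1 / p) +
          (∫⁻ x, (⨆ j : ℕ, 2 ^ (s * j) * localApprox (m + 1) p f x ((1 / 2) ^ j)) ^ p) ^
            (1 / p)) := by
  have hp0 : 0 < p := by linarith
  have : Nonempty (Fin n) := ⟨⟨0, hn⟩⟩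
  obtain ⟨a, C, hμ⟩ := hS.exists_isAhlforsRegular
  obtain ⟨K, hK, hmain⟩ := exists_lintegral_enorm_rpow_mul_inv_infDist_rpow_le hμ hS.1
    (by simpa using hd1) (by simpa using hd2) hp (t := s * p)
    (by simpa using (div_lt_iff₀ hp0).1 hs) m
  have hKp : K ^ (1 / p) ≠ ⊤ := ENNReal.rpow_ne_top_of_nonneg (by positivity) hK
  refine ⟨(K ^ (1 / p)).toReal + 1, by positivity, fun f hf htr => ?_⟩
  have hKc : K ^ (1 / p) ≤ ENNReal.ofReal ((K ^ (1 / p)).toReal + 1) :=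
    (ENNReal.le_ofReal_iff_toReal_le hKp (by positivity)).2 (le_add_of_nonneg_right zero_le_one)
  simp only [iSup_two_rpow_mul_localApprox_rpow m hp0, ← Real.enorm_eq_ofReal_abs]
  grw [hardyLHS_eq S s hp0.le, hmain f hf htr, ENNReal.mul_rpow_of_nonneg _ _ (by positivity),
    ENNReal.rpow_add_le_add_rpow _ _ (by positivity) ((div_le_one hp0).2 hp), hKc]

/-- **Hardy inequality in terms of the sharp maximal function** (inequality (3.13) in
the proof of Theorem 3.9). If `S ⊆ ℝⁿ` (`n ≥ 2`) is a `d`-set with `n−1 < d < n`,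
`1 < p < ∞` and `s > (n−d)/p`, then there is `c > 0` such that every `f ∈ L^p(ℝⁿ)`
with `Tr_S f = 0` ℋᵈ-a.e. satisfies
`(∫ |f(x)|^p / dist(x,S)^{sp} dx)^{1/p} ≤ c (‖f‖_{L^p} + ‖f♯_{s,p}‖_{L^p})`. -/
theorem hardy_sharp_maximal {n : ℕ} (hn : 2 ≤ n) (S : Set (Rn n)) (d C₀ : ℝ)
    (hS : IsDSet S d C₀) (hd1 : (n : ℝ) - 1 < d) (hd2 : d < n)
    (p s : ℝ) (hp : 1 < p) (hs : ((n : ℝ) - d) / p < s) :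
    ∃ c > 0, ∀ f : Rn n → ℝ, Measurable f →
      (∫⁻ x, ENNReal.ofReal |f x| ^ p) < ⊤ →
      TraceZero S d f →
      hardyLHS S s p f ≤ ENNReal.ofReal c *
        ((∫⁻ x, ENNReal.ofReal |f x| ^ p) ^ (1 / p) +
          (∫⁻ x, fSharp s p f x ^ p) ^ (1 / p)) := by
  have hp0 : 0 < p := one_pos.trans hp
  obtain ⟨c, hc, hbound⟩ := hardy_sharp_maximal_general (one_le_two.trans hn) S d C₀ hS hd1 hd2
    p s hp.le hs ⌊s⌋₊
  refine ⟨c, hc, fun f hf hfin htr =>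
    (hbound f (memLp_ofReal_of_lintegral_lt_top hp0 hf hfin) htr).trans ?_⟩
  gcongr with x
  exact iSup_two_rpow_mul_localApprox_le_fSharp s p f x
end
end

section
/- Let S ⊆ ℝⁿ be a d-set with n−1 < d < n. Suppose 1 < r < ∞ and 0 < ω < 1 satisfy ωr > n−d, let r' be the conjugate exponent (1/r + 1/r' = 1), and fix T > 0. Then there is a constant C (depending on S, n, d, r, ω, T) such that for every x ∈ S and every 0 < t ≤ T, (∫_{Q(x,t)} (∫_{Q(y,t)∩S} dℋᵈ(z)/|y−z|^{n−ω})^{r'} dy)^{1/r'} ≤ C t^{d+ω−n/r}, where |y−z| is the Euclidean distance. -/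
open MeasureTheory Metric Set Filter
open scoped ENNReal NNReal Topology

noncomputable section

/-- The Euclidean distance on `Rn n`. -/
def euclDist {n : ℕ} (x y : Rn n) : ℝ := Real.sqrt (∑ i, (x i - y i) ^ 2)

/-!
By Hölder's inequality with the kernel split as `|y - z|^(-s) = |y - z|^(-a) |y - z|^(-b)`, the
inner integral to the power `p` is at most
`(∫ |y - z|^(-bq) dμ(z))^(p/q) ∫ |y - z|^(-ap) dμ(z)`. Integrating in `y` and exchanging the
integrals leaves integrals of single kernels over balls. For measures `μ`, `ν` whose balls have mass
`O(ρᵈ)` and `O(ρᵐ)`, these are bounded by geometric series over dyadic scales, convergent when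
`b q < d` and `a p < m`. Such a splitting `s = a + b` exists as soon as `s < m / p + d / q`; with
`s = n - ω`, `m = n`, `p = r'` and `q = r` this is the condition `n - d < ω r`.
-/

lemma ennreal_rpow_le_rpow_of_nonpos {x y : ℝ≥0∞} {c : ℝ} (hxy : x ≤ y) (hc : c ≤ 0) :
    y ^ c ≤ x ^ c := by
  simpa only [ENNReal.rpow_neg, inv_inv] using
    ENNReal.inv_le_inv.2 (ENNReal.rpow_le_rpow hxy (neg_nonneg.2 hc))

section SchurTest

variable {α β : Type*} [MeasurableSpace α] [MeasurableSpace β] {ν : Measure α} {μ : Measure β}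

lemma lintegral_mul_rpow_le {p q : ℝ} (hpq : p.HolderConjugate q) {f g : β → ℝ≥0∞}
    (hf : AEMeasurable f μ) (hg : AEMeasurable g μ) :
    (∫⁻ z, f z * g z ∂μ) ^ p ≤ (∫⁻ z, g z ^ q ∂μ) ^ (p / q) * ∫⁻ z, f z ^ p ∂μ :=
  calc (∫⁻ z, f z * g z ∂μ) ^ p
      ≤ ((∫⁻ z, f z ^ p ∂μ) ^ (1 / p) * (∫⁻ z, g z ^ q ∂μ) ^ (1 / q)) ^ p :=
        ENNReal.rpow_le_rpow (ENNReal.lintegral_mul_le_Lp_mul_Lq μ hpq hf hg) hpq.nonneg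
    _ = (∫⁻ z, g z ^ q ∂μ) ^ (p / q) * ∫⁻ z, f z ^ p ∂μ := by
        rw [ENNReal.mul_rpow_of_nonneg _ _ hpq.nonneg, ← ENNReal.rpow_mul, ← ENNReal.rpow_mul,
          one_div_mul_cancel hpq.ne_zero, ENNReal.rpow_one, one_div_mul_eq_div, mul_comm]

lemma lintegral_lintegral_mul_rpow_le [SFinite ν] [SFinite μ] {p q : ℝ}
    (hpq : p.HolderConjugate q) {f g : α → β → ℝ≥0∞} (hf : Measurable (Function.uncurry f))
    (hg : ∀ y, AEMeasurable (g y) μ) {A B : ℝ≥0∞}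
    (hA : ∀ y, ∫⁻ z, g y z ^ q ∂μ ≤ A) (hB : ∀ z, ∫⁻ y, f y z ^ p ∂ν ≤ B) :
    (∫⁻ y, (∫⁻ z, f y z * g y z ∂μ) ^ p ∂ν) ^ (1 / p) ≤
      A ^ (1 / q) * (B * μ univ) ^ (1 / p) := by
  have hfp : Measurable (Function.uncurry fun y z => f y z ^ p) := hf.pow_const p
  calc (∫⁻ y, (∫⁻ z, f y z * g y z ∂μ) ^ p ∂ν) ^ (1 / p)
      ≤ (∫⁻ y, A ^ (p / q) * ∫⁻ z, f y z ^ p ∂μ ∂ν) ^ (1 / p) := by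
        refine ENNReal.rpow_le_rpow (lintegral_mono fun y => ?_) hpq.one_div_nonneg
        refine (lintegral_mul_rpow_le hpq hf.of_uncurry_left.aemeasurable (hg y)).trans ?_
        gcongr
        exacts [div_nonneg hpq.nonneg hpq.symm.nonneg, hA y]
    _ = (A ^ (p / q) * ∫⁻ z, ∫⁻ y, f y z ^ p ∂ν ∂μ) ^ (1 / p) := by
        rw [lintegral_const_mul _ (Measurable.lintegral_prod_right hfp),
          lintegral_lintegral_swap hfp.aemeasurable]
    _ ≤ (A ^ (p / q) * ∫⁻ _, B ∂μ) ^ (1 / p) := by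
        have := hpq.one_div_nonneg
        gcongr with z
        exact hB z
    _ = A ^ (1 / q) * (B * μ univ) ^ (1 / p) := by
        rw [lintegral_const, ENNReal.mul_rpow_of_nonneg _ _ hpq.one_div_nonneg,
          ← ENNReal.rpow_mul, div_mul_div_comm, mul_one, mul_comm q p,
          div_mul_cancel_left₀ hpq.ne_zero, one_div q]

end SchurTest

lemma ofReal_two_mul_rpow (t d : ℝ) :
    ENNReal.ofReal (2 * t) ^ d = 2 ^ d * ENNReal.ofReal t ^ d := by
  rw [ENNReal.ofReal_mul two_pos.le, ENNReal.ofReal_ofNat,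
    ENNReal.mul_rpow_of_ne_top ENNReal.ofNat_ne_top ENNReal.ofReal_ne_top]

lemma ofReal_dyadic_rpow_mul {t : ℝ} (ht : 0 < t) (d s : ℝ) (k : ℕ) :
    ENNReal.ofReal (t / 2 ^ (k + 1)) ^ (-s) * ENNReal.ofReal (t / 2 ^ k) ^ d =
      2 ^ s * ENNReal.ofReal t ^ (d - s) * (2 ^ (s - d)) ^ k := by
  have hreal : (t / 2 ^ (k + 1)) ^ (-s) * (t / 2 ^ k) ^ d =
      2 ^ s * t ^ (d - s) * ((2 : ℝ) ^ (s - d)) ^ k := by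
    rw [Real.div_rpow ht.le (by positivity), Real.div_rpow ht.le (by positivity)]
    simp only [← Real.rpow_natCast, ← Real.rpow_mul two_pos.le, div_eq_mul_inv,
      ← Real.rpow_neg two_pos.le]
    rw [mul_mul_mul_comm, ← Real.rpow_add ht, ← Real.rpow_add two_pos, mul_right_comm,
      ← Real.rpow_add two_pos, mul_comm]
    push_cast
    ring_nf
  rw [← ENNReal.ofReal_ofNat 2, ENNReal.ofReal_rpow_of_pos (by positivity),
    ENNReal.ofReal_rpow_of_pos (by positivity), ENNReal.ofReal_rpow_of_pos ht,
    ENNReal.ofReal_rpow_of_pos two_pos, ENNReal.ofReal_rpow_of_pos two_pos,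
    ← ENNReal.ofReal_pow (by positivity), ← ENNReal.ofReal_mul (by positivity),
    ← ENNReal.ofReal_mul (by positivity), ← ENNReal.ofReal_mul (by positivity), hreal]

lemma exists_add_eq_of_lt_div_add_div {m d s p q : ℝ} (hm : 0 < m) (hd : 0 < d) (hp : 0 < p)
    (hq : 0 < q) (hs : 0 ≤ s) (hs' : s < m / p + d / q) :
    ∃ a b : ℝ, 0 ≤ a ∧ 0 ≤ b ∧ a + b = s ∧ a * p < m ∧ b * q < d := by
  set D := m / p + d / q with hD
  have hD0 : 0 < D := by positivity
  have hθ : s / D < 1 := (div_lt_one hD0).2 hs'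
  refine ⟨s / D * (m / p), s / D * (d / q), by positivity, by positivity, ?_, ?_, ?_⟩
  · rw [← mul_add, ← hD, div_mul_cancel₀ s hD0.ne']
  · rw [mul_assoc, div_mul_cancel₀ m hp.ne']
    exact mul_lt_of_lt_one_left hm hθ
  · rw [mul_assoc, div_mul_cancel₀ d hq.ne']
    exact mul_lt_of_lt_one_left hd hθ

lemma mul_rpow_mul_rpow_of_holderConjugate {p q m d a b : ℝ} (hpq : p.HolderConjugate q)
    {A B E τ : ℝ≥0∞} (hτ : τ ≠ 0) (hτ' : τ ≠ ∞) :
    (A * τ ^ (d - b * q)) ^ (1 / q) * (B * τ ^ (m - a * p) * (E * τ ^ d)) ^ (1 / p) =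
      A ^ (1 / q) * (B * E) ^ (1 / p) * τ ^ (m / p + d - (a + b)) := by
  have hexp : (d - b * q) * (1 / q) + (m - a * p + d) * (1 / p) = m / p + d - (a + b) := by
    have hp := hpq.ne_zero
    have hq := hpq.symm.ne_zero
    have hd : d * (1 / p + 1 / q) = d := by simp [hpq.inv_add_inv_eq_one]
    field_simp at hd ⊢
    linarith
  rw [mul_mul_mul_comm, ← ENNReal.rpow_add _ _ hτ hτ',
    ENNReal.mul_rpow_of_nonneg _ _ hpq.symm.one_div_nonneg,
    ENNReal.mul_rpow_of_nonneg _ _ hpq.one_div_nonneg, mul_mul_mul_comm,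
    ← ENNReal.rpow_mul, ← ENNReal.rpow_mul, ← ENNReal.rpow_add _ _ hτ hτ', hexp]

section PseudoMetricSpace

variable {X : Type*} [PseudoMetricSpace X] {t s : ℝ}

/-- The Riesz kernel `|y - z|⁻ˢ` of a pseudometric space, cut off at distance `t`. On the diagonal
it takes the value `∞` if `0 < s`. -/
def truncRieszKernel (t s : ℝ) (y z : X) : ℝ≥0∞ :=
  (closedBall y t).indicator (fun w => edist y w ^ (-s)) z

lemma truncRieszKernel_comm (y z : X) : truncRieszKernel t s y z = truncRieszKernel t s z y := by
  simp only [truncRieszKernel, indicator, mem_closedBall, dist_comm, edist_comm]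

lemma truncRieszKernel_rpow {u : ℝ} (hu : 0 < u) (y z : X) :
    truncRieszKernel t s y z ^ u = truncRieszKernel t (s * u) y z := by
  by_cases hz : z ∈ closedBall y t <;>
    simp [truncRieszKernel, hz, hu, ← ENNReal.rpow_mul]

lemma truncRieszKernel_add {p q : ℝ} (hp : 0 ≤ p) (hq : 0 ≤ q) (y z : X) :
    truncRieszKernel t (p + q) y z = truncRieszKernel t p y z * truncRieszKernel t q y z := by
  by_cases hz : z ∈ closedBall y t
  · simp only [truncRieszKernel, indicator_of_mem hz, ENNReal.rpow_neg,
      ENNReal.rpow_add_of_nonneg p q hp hq]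
    exact ENNReal.mul_inv (.inr (ENNReal.rpow_ne_top_of_nonneg hq (edist_ne_top y z)))
      (.inl (ENNReal.rpow_ne_top_of_nonneg hp (edist_ne_top y z)))
  · simp [truncRieszKernel, hz]

-- Off the diagonal the term of the dyadic annulus containing `z` suffices; on the diagonal every
-- term occurs and the sum is `∞`.
lemma edist_rpow_neg_le_tsum_indicator (hs : 0 ≤ s) (ht : 0 < t) {y z : X}
    (hz : z ∈ closedBall y t) :
    edist y z ^ (-s) ≤ ∑' k : ℕ, (closedBall y (t / 2 ^ k)).indicator
      (fun _ => ENNReal.ofReal (t / 2 ^ (k + 1)) ^ (-s)) z := by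
  have antitone {a b : ℝ} (hab : a ≤ b) : ENNReal.ofReal b ^ (-s) ≤ ENNReal.ofReal a ^ (-s) :=
    ennreal_rpow_le_rpow_of_nonpos (ENNReal.ofReal_le_ofReal hab) (neg_nonpos.2 hs)
  rw [mem_closedBall'] at hz
  obtain hyz | hyz := (dist_nonneg (x := y) (y := z)).eq_or_lt
  · refine le_top.trans_eq (top_unique ?_).symm
    calc ∞ = ∑' _ : ℕ, ENNReal.ofReal t ^ (-s) :=
          (ENNReal.tsum_const_eq_top_of_ne_zero (by simp [hs])).symm
      _ ≤ _ := by
          refine ENNReal.tsum_le_tsum fun k => ?_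
          rw [indicator_of_mem (mem_closedBall'.2 (hyz ▸ by positivity))]
          exact antitone (div_le_self ht.le (one_le_pow₀ one_le_two))
  · obtain ⟨k, hk, hk'⟩ := exists_nat_pow_near ((one_le_div hyz).2 hz) one_lt_two
    refine le_trans ?_ (ENNReal.le_tsum k)
    rw [indicator_of_mem (mem_closedBall'.2 ((le_div_comm₀ (by positivity) hyz).1 hk)), edist_dist]
    exact antitone ((div_lt_comm₀ hyz (by positivity)).1 hk').le

variable [MeasurableSpace X]

/-- Upper Ahlfors regularity up to scale `R`: every closed ball of radius `ρ ≤ R`, whether or not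
its center lies in the support of `μ`, has measure at most `M ρᵈ`. -/
def IsUpperRegular (μ : Measure X) (d : ℝ) (M : ℝ≥0) (R : ℝ) : Prop :=
  ∀ (y : X) (ρ : ℝ), 0 < ρ → ρ ≤ R → μ (closedBall y ρ) ≤ M * ENNReal.ofReal ρ ^ d

namespace IsUpperRegular

variable {μ : Measure X} {d R : ℝ} {M : ℝ≥0}

lemma restrict (hμ : IsUpperRegular μ d M R) (A : Set X) : IsUpperRegular (μ.restrict A) d M R :=
  fun y ρ hρ hρR => (Measure.restrict_apply_le _ _).trans (hμ y ρ hρ hρR)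

lemma isFiniteMeasure_restrict_closedBall (hμ : IsUpperRegular μ d M R) (x : X) {t : ℝ}
    (ht : 0 < t) (htR : t ≤ R) : IsFiniteMeasure (μ.restrict (closedBall x t)) := by
  refine isFiniteMeasure_restrict.2 ((hμ x t ht htR).trans_lt ?_).ne
  exact ENNReal.mul_lt_top ENNReal.coe_lt_top
    (ENNReal.rpow_ne_top_of_ne_zero (ENNReal.ofReal_pos.2 ht).ne' ENNReal.ofReal_ne_top).lt_top

lemma restrict_of_forall_mem [OpensMeasurableSpace X] {S : Set X}
    (hS : ∀ w ∈ S, ∀ ρ, 0 < ρ → ρ ≤ R → μ (closedBall w ρ ∩ S) ≤ M * ENNReal.ofReal ρ ^ d) :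
    IsUpperRegular (μ.restrict S) d (M * 2 ^ d) (R / 2) := by
  intro y ρ hρ hρR
  rw [Measure.restrict_apply measurableSet_closedBall]
  obtain hempty | ⟨w, hwy, hwS⟩ := (closedBall y ρ ∩ S).eq_empty_or_nonempty
  · simp [hempty]
  have hsub : closedBall y ρ ⊆ closedBall w (2 * ρ) :=
    closedBall_subset_closedBall' (by linarith [mem_closedBall'.1 hwy])
  calc μ (closedBall y ρ ∩ S)
      ≤ μ (closedBall w (2 * ρ) ∩ S) := measure_mono (inter_subset_inter_left S hsub)
    _ ≤ M * ENNReal.ofReal (2 * ρ) ^ d := hS w hwS (2 * ρ) (by linarith) (by linarith)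
    _ = ↑(M * 2 ^ d) * ENNReal.ofReal ρ ^ d := by
      rw [ofReal_two_mul_rpow, ENNReal.coe_mul, ENNReal.coe_rpow_of_ne_zero two_ne_zero,
        ENNReal.coe_ofNat, mul_assoc]

end IsUpperRegular

variable [OpensMeasurableSpace X]

lemma measurable_uncurry_truncRieszKernel [SecondCountableTopology X] :
    Measurable (Function.uncurry (truncRieszKernel (X := X) t s)) := by
  have hset : MeasurableSet {w : X × X | w.2 ∈ closedBall w.1 t} :=
    measurableSet_le (measurable_snd.dist measurable_fst) measurable_const
  exact ((measurable_fst.edist measurable_snd).pow_const (-s)).indicator hset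

lemma lintegral_truncRieszKernel (μ : Measure X) (y : X) :
    ∫⁻ z, truncRieszKernel t s y z ∂μ = ∫⁻ z in closedBall y t, edist y z ^ (-s) ∂μ :=
  lintegral_indicator measurableSet_closedBall _

/-- The constant in the bound for the integral of a truncated Riesz kernel of exponent `s` against
an upper `d`-regular measure: the sum of the geometric series over dyadic annuli. -/
def rieszConst (d s : ℝ) : ℝ≥0∞ := 2 ^ s * (1 - 2 ^ (s - d))⁻¹

lemma rieszConst_ne_top {d s : ℝ} (h : s < d) : rieszConst d s ≠ ∞ := by
  refine ENNReal.mul_ne_top (ENNReal.rpow_ne_top_of_ne_zero two_ne_zero ENNReal.ofNat_ne_top) ?_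
  rw [ENNReal.inv_ne_top, ← pos_iff_ne_zero, tsub_pos_iff_lt]
  exact ENNReal.rpow_lt_one_of_one_lt_of_neg ENNReal.one_lt_two (sub_neg.2 h)

lemma IsUpperRegular.lintegral_truncRieszKernel_le {μ : Measure X} {d R : ℝ} {M : ℝ≥0}
    (hμ : IsUpperRegular μ d M R) (hs : 0 ≤ s) (ht : 0 < t) (htR : t ≤ R) (y : X) :
    ∫⁻ z, truncRieszKernel t s y z ∂μ ≤ rieszConst d s * M * ENNReal.ofReal t ^ (d - s) := by
  set ρ : ℕ → ℝ := fun k => t / 2 ^ k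
  have hρ (k : ℕ) : μ (closedBall y (ρ k)) ≤ M * ENNReal.ofReal (ρ k) ^ d :=
    hμ y _ (by positivity) ((div_le_self ht.le (one_le_pow₀ one_le_two)).trans htR)
  calc ∫⁻ z, truncRieszKernel t s y z ∂μ
      ≤ ∫⁻ z, ∑' k, (closedBall y (ρ k)).indicator
          (fun _ => ENNReal.ofReal (ρ (k + 1)) ^ (-s)) z ∂μ :=
        lintegral_mono fun _ =>
          indicator_apply_le' (fun hz => edist_rpow_neg_le_tsum_indicator hs ht hz) fun _ => zero_le
    _ = ∑' k, ENNReal.ofReal (ρ (k + 1)) ^ (-s) * μ (closedBall y (ρ k)) := by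
        rw [lintegral_tsum fun k =>
          (measurable_const.indicator measurableSet_closedBall).aemeasurable]
        simp only [lintegral_indicator_const measurableSet_closedBall]
    _ ≤ ∑' k, M * (2 ^ s * ENNReal.ofReal t ^ (d - s)) * (2 ^ (s - d)) ^ k := by
        refine ENNReal.tsum_le_tsum fun k => (mul_le_mul_right (hρ k) _).trans_eq ?_
        rw [mul_left_comm, ofReal_dyadic_rpow_mul ht, mul_assoc (M : ℝ≥0∞)]
    _ = rieszConst d s * M * ENNReal.ofReal t ^ (d - s) := by
        rw [ENNReal.tsum_mul_left, ENNReal.tsum_geometric, rieszConst]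
        ring

lemma lintegral_truncRieszKernel_restrict_closedBall {μ : Measure X} {x y : X}
    (hy : y ∈ closedBall x t) :
    ∫⁻ z, truncRieszKernel t s y z ∂μ.restrict (closedBall x (2 * t)) =
      ∫⁻ z in closedBall y t, edist y z ^ (-s) ∂μ := by
  rw [lintegral_truncRieszKernel, Measure.restrict_restrict_of_subset]
  exact closedBall_subset_closedBall' (by linarith [mem_closedBall.1 hy])

section Energy

variable [SecondCountableTopology X] {μ ν : Measure X} {d m R p q : ℝ} {M N : ℝ≥0}

lemma lintegral_rieszPotential_rpow_le (hμ : IsUpperRegular μ d M R)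
    (hν : IsUpperRegular ν m N R) (hpq : p.HolderConjugate q) {a b : ℝ} (ha : 0 ≤ a) (hb : 0 ≤ b)
    (x : X) (ht : 0 < t) (htR : 2 * t ≤ R) :
    (∫⁻ y in closedBall x t, (∫⁻ z in closedBall y t, edist y z ^ (-(a + b)) ∂μ) ^ p ∂ν) ^ (1 / p)
      ≤ (rieszConst d (b * q) * M) ^ (1 / q) * (rieszConst m (a * p) * N * (M * 2 ^ d)) ^ (1 / p) *
        ENNReal.ofReal t ^ (m / p + d - (a + b)) := by
  set μ' := μ.restrict (closedBall x (2 * t))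
  set ν' := ν.restrict (closedBall x t)
  set τ := ENNReal.ofReal t
  have hτ : τ ≠ 0 := (ENNReal.ofReal_pos.2 ht).ne'
  have htR' : t ≤ R := by linarith
  have : IsFiniteMeasure μ' := hμ.isFiniteMeasure_restrict_closedBall x (by positivity) htR
  have : IsFiniteMeasure ν' := hν.isFiniteMeasure_restrict_closedBall x ht htR'
  have hp := hpq.one_div_nonneg
  have hmass : μ' univ ≤ M * 2 ^ d * τ ^ d := by
    rw [Measure.restrict_apply_univ, mul_assoc, ← ofReal_two_mul_rpow]
    exact hμ x (2 * t) (by positivity) htR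
  have hsplit : ∀ y ∈ closedBall x t, ∫⁻ z in closedBall y t, edist y z ^ (-(a + b)) ∂μ =
      ∫⁻ z, truncRieszKernel t a y z * truncRieszKernel t b y z ∂μ' := fun y hy => by
    simp only [← truncRieszKernel_add ha hb, μ', lintegral_truncRieszKernel_restrict_closedBall hy]
  calc (∫⁻ y in closedBall x t, (∫⁻ z in closedBall y t, edist y z ^ (-(a + b)) ∂μ) ^ p ∂ν) ^
          (1 / p)
      = (∫⁻ y, (∫⁻ z, truncRieszKernel t a y z * truncRieszKernel t b y z ∂μ') ^ p ∂ν') ^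
          (1 / p) := by
        rw [setLIntegral_congr_fun measurableSet_closedBall fun y hy => by rw [hsplit y hy]]
    _ ≤ (rieszConst d (b * q) * M * τ ^ (d - b * q)) ^ (1 / q) *
          (rieszConst m (a * p) * N * τ ^ (m - a * p) * μ' univ) ^ (1 / p) := by
        refine lintegral_lintegral_mul_rpow_le hpq measurable_uncurry_truncRieszKernel
          (fun y => measurable_uncurry_truncRieszKernel.of_uncurry_left.aemeasurable)
          (fun y => ?_) fun z => ?_
        · simp only [truncRieszKernel_rpow hpq.symm.pos]
          exact (hμ.restrict _).lintegral_truncRieszKernel_le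
            (mul_nonneg hb hpq.symm.nonneg) ht htR' y
        · simp only [truncRieszKernel_rpow hpq.pos, truncRieszKernel_comm _ z]
          exact (hν.restrict _).lintegral_truncRieszKernel_le (mul_nonneg ha hpq.nonneg) ht htR' z
    _ ≤ (rieszConst d (b * q) * M * τ ^ (d - b * q)) ^ (1 / q) *
          (rieszConst m (a * p) * N * τ ^ (m - a * p) * (M * 2 ^ d * τ ^ d)) ^ (1 / p) := by
        gcongr
    _ = _ := mul_rpow_mul_rpow_of_holderConjugate hpq hτ ENNReal.ofReal_ne_top

lemma exists_lintegral_rieszPotential_rpow_le (hμ : IsUpperRegular μ d M R)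
    (hν : IsUpperRegular ν m N R) (hpq : p.HolderConjugate q) (hd : 0 < d) (hm : 0 < m)
    (hs : 0 ≤ s) (hs' : s < m / p + d / q) :
    ∃ C : ℝ≥0, ∀ (x : X) (t : ℝ), 0 < t → 2 * t ≤ R →
      (∫⁻ y in closedBall x t, (∫⁻ z in closedBall y t, edist y z ^ (-s) ∂μ) ^ p ∂ν) ^ (1 / p) ≤
        C * ENNReal.ofReal t ^ (m / p + d - s) := by
  obtain ⟨a, b, ha, hb, rfl, ham, hbd⟩ :=
    exists_add_eq_of_lt_div_add_div hm hd hpq.pos hpq.symm.pos hs hs'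
  have h2 : (2 : ℝ≥0∞) ^ d ≠ ∞ := ENNReal.rpow_ne_top_of_nonneg hd.le ENNReal.ofNat_ne_top
  obtain ⟨C, hC⟩ : ∃ C : ℝ≥0, C = (rieszConst d (b * q) * M) ^ (1 / q) *
      (rieszConst m (a * p) * N * (M * 2 ^ d)) ^ (1 / p) := by
    refine ⟨_, ENNReal.coe_toNNReal (ENNReal.mul_ne_top
      (ENNReal.rpow_ne_top_of_nonneg hpq.symm.one_div_nonneg ?_)
      (ENNReal.rpow_ne_top_of_nonneg hpq.one_div_nonneg ?_))⟩
    · exact ENNReal.mul_ne_top (rieszConst_ne_top hbd) ENNReal.coe_ne_top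
    · exact ENNReal.mul_ne_top (ENNReal.mul_ne_top (rieszConst_ne_top ham) ENNReal.coe_ne_top)
        (ENNReal.mul_ne_top ENNReal.coe_ne_top h2)
  exact ⟨C, fun x t ht htR => hC ▸ lintegral_rieszPotential_rpow_le hμ hν hpq ha hb x ht htR⟩

end Energy

end PseudoMetricSpace

lemma IsUpperRegular.exists_change_scale {E : Type*} [SeminormedAddCommGroup E] [ProperSpace E]
    [MeasurableSpace E] {μ : Measure E} {d R₀ : ℝ} {M : ℝ≥0} (hμ : IsUpperRegular μ d M R₀)
    (hd : 0 ≤ d) (hR₀ : 0 < R₀) (R : ℝ) : ∃ M' : ℝ≥0, IsUpperRegular μ d M' R := by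
  obtain ⟨s, -, hs, hcover⟩ := finite_cover_balls_of_compact (isCompact_closedBall (0 : E) R) hR₀
  lift s to Finset E using hs
  refine ⟨(s.card + 1) * M, fun y ρ hρ hρR => ?_⟩
  obtain hρ₀ | hρ₀ := le_total ρ R₀
  · refine (hμ y ρ hρ hρ₀).trans ?_
    gcongr
    exact le_mul_of_one_le_left' le_add_self
  have hsub : closedBall y ρ ⊆ ⋃ x ∈ s, closedBall (y + x) R₀ := fun z hz => by
    have hzy : z - y ∈ closedBall (0 : E) R :=
      mem_closedBall_zero_iff.2 ((mem_closedBall_iff_norm.1 hz).trans hρR)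
    obtain ⟨x, hx, hzx⟩ := mem_iUnion₂.1 (hcover hzy)
    refine mem_iUnion₂.2 ⟨x, hx, mem_closedBall_iff_norm.2 ?_⟩
    rw [← sub_sub]
    exact (mem_ball_iff_norm.1 hzx).le
  calc μ (closedBall y ρ)
      ≤ ∑ x ∈ s, μ (closedBall (y + x) R₀) :=
        (measure_mono hsub).trans (measure_biUnion_finset_le _ _)
    _ ≤ ∑ _x ∈ s, M * ENNReal.ofReal ρ ^ d := by
        refine Finset.sum_le_sum fun x _ => (hμ (y + x) R₀ hR₀ le_rfl).trans ?_
        gcongr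
    _ = s.card * M * ENNReal.ofReal ρ ^ d := by rw [Finset.sum_const, nsmul_eq_mul, mul_assoc]
    _ ≤ ↑((s.card + 1) * M) * ENNReal.ofReal ρ ^ d := by
        push_cast
        gcongr
        exact le_self_add

lemma IsUpperRegular.exists_restrict_of_forall_mem {E : Type*} [SeminormedAddCommGroup E]
    [ProperSpace E] [MeasurableSpace E] [OpensMeasurableSpace E] {μ : Measure E} {S : Set E}
    {d C₀ R₀ : ℝ} (hR₀ : 0 < R₀) (hd : 0 ≤ d)
    (hS : ∀ w ∈ S, ∀ ρ, 0 < ρ → ρ ≤ R₀ → μ (closedBall w ρ ∩ S) ≤ ENNReal.ofReal (C₀ * ρ ^ d))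
    (R : ℝ) : ∃ M : ℝ≥0, IsUpperRegular (μ.restrict S) d M R := by
  refine IsUpperRegular.exists_change_scale (M := C₀.toNNReal * 2 ^ d) ?_ hd (half_pos hR₀) R
  refine IsUpperRegular.restrict_of_forall_mem fun w hw ρ hρ hρR => (hS w hw ρ hρ hρR).trans_eq ?_
  rw [ENNReal.ofReal_mul' (by positivity), ENNReal.ofReal_rpow_of_pos hρ, ENNReal.ofReal]

lemma isUpperRegular_addHaar {E : Type*} [NormedAddCommGroup E] [NormedSpace ℝ E]
    [FiniteDimensional ℝ E] [MeasurableSpace E] [BorelSpace E] (μ : Measure E) [μ.IsAddHaarMeasure]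
    (R : ℝ) : IsUpperRegular μ (Module.finrank ℝ E) (μ (ball 0 1)).toNNReal R := by
  intro y ρ hρ _
  rw [μ.addHaar_closedBall y hρ.le, ENNReal.coe_toNNReal measure_ball_lt_top.ne, mul_comm,
    ENNReal.rpow_natCast, ENNReal.ofReal_pow hρ.le]

lemma edist_le_ofReal_euclDist {n : ℕ} (x y : Rn n) :
    edist x y ≤ ENNReal.ofReal (euclDist x y) := by
  rw [edist_dist]
  refine ENNReal.ofReal_le_ofReal ((dist_pi_le_iff (Real.sqrt_nonneg _)).2 fun i => ?_)
  exact Real.abs_le_sqrt (Finset.single_le_sum (f := fun i => (x i - y i) ^ 2)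
    (fun i _ => sq_nonneg _) (Finset.mem_univ i))

lemma setLIntegral_ofReal_euclDist_rpow_le {n : ℕ} {e : ℝ} (he : e ≤ 0) (μ : Measure (Rn n))
    (S : Set (Rn n)) (y : Rn n) (t : ℝ) :
    ∫⁻ z in closedBall y t ∩ S, ENNReal.ofReal (euclDist y z) ^ e ∂μ ≤
      ∫⁻ z in closedBall y t, edist y z ^ e ∂μ.restrict S := by
  rw [Measure.restrict_restrict measurableSet_closedBall]
  exact lintegral_mono fun z => ennreal_rpow_le_rpow_of_nonpos (edist_le_ofReal_euclDist y z) he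

theorem energy_estimate_general {n : ℕ} {S : Set (Rn n)} {d C₀ : ℝ}
    (hS : ∀ w ∈ S, ∀ ρ : ℝ, 0 < ρ → ρ ≤ 1 →
      μH[d] (closedBall w ρ ∩ S) ≤ ENNReal.ofReal (C₀ * ρ ^ d))
    (hd : 0 < d) {r ω r' : ℝ} (hr : r'.HolderConjugate r) (hω : 0 < ω) (hωn : ω ≤ n)
    (hωr : (n : ℝ) - d < ω * r) (T : ℝ) :
    ∃ C > 0, ∀ (x : Rn n) (t : ℝ), 0 < t → t ≤ T →
      (∫⁻ y in closedBall x t,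
          (∫⁻ z in closedBall y t ∩ S,
            ENNReal.ofReal (euclDist y z) ^ (ω - n) ∂μH[d]) ^ r') ^ (1 / r')
        ≤ ENNReal.ofReal C * ENNReal.ofReal (t ^ (d + ω - n / r)) := by
  obtain ⟨M, hμ⟩ := IsUpperRegular.exists_restrict_of_forall_mem one_pos hd.le hS (2 * T)
  have hν := isUpperRegular_addHaar (volume : Measure (Rn n)) (2 * T)
  rw [Module.finrank_fin_fun] at hν
  have hn : (n : ℝ) / r' = n - n / r := by
    rw [div_eq_mul_inv, div_eq_mul_inv, ← hr.symm.one_sub_inv, mul_one_sub]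
  have hs : (n : ℝ) - ω < n / r' + d / r := by
    have := (div_lt_iff₀ hr.symm.pos).2 hωr
    rw [sub_div] at this
    linarith
  obtain ⟨C, hC⟩ := exists_lintegral_rieszPotential_rpow_le hμ hν hr hd (hω.trans_le hωn)
    (sub_nonneg.2 hωn) hs
  refine ⟨C + 1, by positivity, fun x t ht htT => ?_⟩
  calc (∫⁻ y in closedBall x t, (∫⁻ z in closedBall y t ∩ S,
          ENNReal.ofReal (euclDist y z) ^ (ω - n) ∂μH[d]) ^ r') ^ (1 / r')
      ≤ (∫⁻ y in closedBall x t, (∫⁻ z in closedBall y t,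
          edist y z ^ (-(n - ω)) ∂μH[d].restrict S) ^ r') ^ (1 / r') := by
        rw [neg_sub]
        refine ENNReal.rpow_le_rpow (lintegral_mono fun y => ?_) hr.one_div_nonneg
        exact ENNReal.rpow_le_rpow
          (setLIntegral_ofReal_euclDist_rpow_le (sub_nonpos.2 hωn) _ S y t) hr.nonneg
    _ ≤ C * ENNReal.ofReal t ^ (n / r' + d - (n - ω)) := hC x t ht (by linarith)
    _ ≤ ENNReal.ofReal (C + 1) * ENNReal.ofReal (t ^ (d + ω - n / r)) := by
        rw [← ENNReal.ofReal_rpow_of_pos ht, show n / r' + d - (n - ω) = d + ω - n / r by linarith,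
          ← ENNReal.ofReal_coe_nnreal]
        gcongr
        exact le_add_of_nonneg_right zero_le_one

/-- **Energy type estimate** (Lemma 2.5). Let `S ⊆ ℝⁿ` be a `d`-set with `n−1 < d < n`,
let `1 < r < ∞` and `0 < ω < 1` satisfy `ωr > n−d`, let `r'` be the conjugate exponent
and `T > 0`. Then there is `C > 0` such that for every `x ∈ S` and `0 < t ≤ T`,
`(∫_{Q(x,t)} (∫_{Q(y,t)∩S} dℋᵈ(z)/|y−z|^{n−ω})^{r'} dy)^{1/r'} ≤ C t^{d+ω−n/r}`,
with `|y−z|` the Euclidean distance. (Note `1/|y−z|^{n−ω} = |y−z|^{ω−n}`.) -/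
theorem energy_estimate {n : ℕ} (S : Set (Rn n)) (d C₀ : ℝ) (hS : IsDSet S d C₀)
    (hd1 : (n : ℝ) - 1 < d) (hd2 : d < n) (r ω r' T : ℝ)
    (hr : 1 < r) (hω0 : 0 < ω) (hω1 : ω < 1) (hωr : (n : ℝ) - d < ω * r)
    (hr' : 1 / r + 1 / r' = 1) (hT : 0 < T) :
    ∃ C > 0, ∀ x ∈ S, ∀ t : ℝ, 0 < t → t ≤ T →
      (∫⁻ y in closedBall x t,
          (∫⁻ z in closedBall y t ∩ S,
            ENNReal.ofReal (euclDist y z) ^ (ω - n) ∂μH[d]) ^ r') ^ (1 / r')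
        ≤ ENNReal.ofReal C * ENNReal.ofReal (t ^ (d + ω - n / r)) := by
  have hconj : r'.HolderConjugate r :=
    (Real.holderConjugate_iff.2 ⟨hr, by simpa only [one_div] using hr'⟩).symm
  obtain rfl | hn := n.eq_zero_or_pos
  -- In dimension `0` the kernel is `0 ^ ω = 0`.
  · exact ⟨1, one_pos, by simp [euclDist, hω0, hconj.pos]⟩
  · have hn : (1 : ℝ) ≤ n := by exact_mod_cast hn
    obtain ⟨C, hC, hle⟩ := energy_estimate_general (fun w hw ρ h h' => (hS.2.2 w hw ρ h h').2)
      (by linarith) hconj hω0 (by linarith) hωr T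
    exact ⟨C, hC, fun x _ => hle x⟩
end
end
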